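/- Dimension of intersections of winning sets: Let n ∈ ℕ, let A be a diagonal (n×n)-matrix with diagonal entries β₁₁,…,β_nn ∈ (0,1/5), let c ∈ (0,1) and ρ₂ > 0. Let I be an at most countable set and, for each i ∈ I, let α_i ∈ (0,1) and S_i ∈ 𝒮(α_i,A,c,ρ₂); set S = ∩_{i∈I} S_i. Suppose there exist α ∈ (0,1) with α^c = Σ_{i∈I} α_i^c and δ ∈ (0,1) such that α^c ≤ δ²(1 − (∏_{j=1}^n β_jj)^{1−c}) < 1 and 3^{−n}∏_{j=1}^n (1 − 5β_jj^{⌊δα^{−1}⌋}) > 8^n(1 + 2^{2n+1})δ. Then for every y ∈ ℝ^n, the set S ∩ (A(B[0,ρ₂]) + y) is non-empty and dim_H(S ∩ (A(B[0,ρ₂]) + y)) ≥ max{n − K₁·α/|log β_max|, 0}, where β_max = max_j β_jj and K₁ = 2δ^{−1}|log(3^{−n}∏_{j=1}^n (1 − 5β_jj^{⌊δα^{−1}⌋}) − 8^n(1 + 2^{2n+1})δ)|. -/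

import Mathlib

open scoped ENNReal

/-- The axis-parallel closed box `A^t(B[0,r]) + y`, where `A` is the diagonal matrix with
diagonal entries `β j`: the set of `x` with `|x j - y j| ≤ (β j)^t * r` for every `j`. -/
def gameBox {n : ℕ} (β : Fin n → ℝ) (t r : ℝ) (y : Fin n → ℝ) : Set (Fin n → ℝ) :=
  {x | ∀ j, |x j - y j| ≤ β j ^ t * r}

/-- A legal move of Player II on turn `m + 1` (turns are indexed from `1` in the paper) of the
`(α, A, c, ρ₂, ρ₁)`-potential game: an at most countable collection of pairs `(q, y)` with
`q ≥ 1`, satisfying, when `c > 0`,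
`Σ (∏_j β_j^q)^c ≤ (α ∏_j β_j^(m+1))^c`, and, when `c = 0`, consisting of at most one pair
`(q, y)`, which must satisfy `∏_j β_j^q ≤ α ∏_j β_j^(m+1)`. The empty collection (a skip) is
always legal. -/
def LegalMove {n : ℕ} (β : Fin n → ℝ) (α c : ℝ) (m : ℕ)
    (M : Set (ℝ × (Fin n → ℝ))) : Prop :=
  M.Countable ∧ (∀ p ∈ M, 1 ≤ p.1) ∧
    (if 0 < c then
      ∑' p : M, ENNReal.ofReal ((∏ j, β j ^ p.1.1) ^ c)
        ≤ ENNReal.ofReal ((α * ∏ j, β j ^ (m + 1 : ℝ)) ^ c)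
    else
      M.Subsingleton ∧ ∀ p ∈ M, (∏ j, β j ^ p.1) ≤ α * ∏ j, β j ^ (m + 1 : ℝ))

/-- `S` is a winning set for Player II in the `(α, A, c, ρ₂, ρ₁)`-potential game, where `A` is
the diagonal matrix with diagonal entries `β j`.  Player I's play on turn `m + 1` is
`U_{m+1} = A^{m+1}(B[0,r]) + b m` with `ρ₂ ≤ r ≤ ρ₁` and `U_{m+2} ⊆ U_{m+1}`; a strategy for
Player II assigns to every finite history (the radius `r` together with the centres
`b 0, …, b m` of Player I's plays so far) a collection of pairs `(q, y)`, which must be a legal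
move whenever the history is legal.  The strategy is winning for `S` if for every legal infinite
play in which Player II follows it, every point `x` of `⋂ U_m` which avoids the deleted region
`⋃_m ⋃_{(q,y)} (A^q(B[0,r]) + y)` lies in `S`. -/
def IsWinning {n : ℕ} (β : Fin n → ℝ) (α c ρ₂ ρ₁ : ℝ) (S : Set (Fin n → ℝ)) : Prop :=
  ∃ σ : ℝ → (m : ℕ) → (Fin (m + 1) → (Fin n → ℝ)) → Set (ℝ × (Fin n → ℝ)),
    (∀ (r : ℝ) (m : ℕ) (b : Fin (m + 1) → (Fin n → ℝ)),
      ρ₂ ≤ r → r ≤ ρ₁ →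
      (∀ i : Fin m,
        gameBox β ((i : ℕ) + 2 : ℝ) r (b i.succ) ⊆ gameBox β ((i : ℕ) + 1 : ℝ) r (b i.castSucc)) →
      LegalMove β α c m (σ r m b)) ∧
    (∀ (r : ℝ) (b : ℕ → (Fin n → ℝ)),
      ρ₂ ≤ r → r ≤ ρ₁ →
      (∀ m : ℕ, gameBox β ((m : ℕ) + 2 : ℝ) r (b (m + 1)) ⊆ gameBox β ((m : ℕ) + 1 : ℝ) r (b m)) →
      ∀ x : Fin n → ℝ, (∀ m : ℕ, x ∈ gameBox β ((m : ℕ) + 1 : ℝ) r (b m)) →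
        x ∉ ⋃ (m : ℕ), ⋃ p ∈ σ r m (fun i : Fin (m + 1) => b (i : ℕ)), gameBox β p.1 r p.2 →
        x ∈ S)

/-- The family `𝒮(α, A, c, ρ₂)` of sets that are `(α, A, c, ρ₂, ρ₁)`-winning for some
`ρ₁ ≥ ρ₂`. -/
def winFamily {n : ℕ} (β : Fin n → ℝ) (α c ρ₂ : ℝ) : Set (Set (Fin n → ℝ)) :=
  {S | ∃ ρ₁ : ℝ, ρ₂ ≤ ρ₁ ∧ IsWinning β α c ρ₂ ρ₁ S}

/-!
The `c`-th power turns the sum over `i` in the hypothesis on `α` into additivity of the bound on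
Player II's moves, so the union of the strategies for the `S i` wins for `⋂ i, S i` with parameter
`α`. It remains to find many plays against this one strategy which end outside the deleted region.

Call a position good if the `c`-volumes of the deleted boxes meeting Player I's current box add up
to at most `δ`, relative to that box. From a good position descend `N = ⌊δ/α⌋` turns to one of about
`3⁻ⁿ P⁻ᴺ` pairwise disjoint subboxes, where `P = det A`. Weight a deleted box by its relative
`c`-volume divided by `δ` and truncate this weight at `1`: a deleted box which is larger than the
subboxes may meet all of them, a smaller one only `3ⁿ`, and in either case the weights it
contributes add up to a bounded multiple of its `c`-volume. Summed over the moves made so far, this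
leaves at least `κ P⁻ᴺ` subboxes with total weight below `1`, and these are good again.

Iterating gives a tree with `R ≥ κ P⁻ᴺ` good descendants at every `N`-th turn. Deleted boxes have a
fixed size, which eventually exceeds what a good position tolerates, so the outcomes avoid the
deleted region. The uniform measure on the tree, together with a volume bound for the number of
disjoint boxes near a ball, yields the dimension by the mass distribution principle.
-/

namespace PotentialGame

open MeasureTheory

variable {n : ℕ} {β : Fin n → ℝ}

/-! ### Boxes -/

lemma gameBox_eq_Icc (β : Fin n → ℝ) (t r : ℝ) (y : Fin n → ℝ) :
    gameBox β t r y = Set.Icc (y - fun j => β j ^ t * r) (y + fun j => β j ^ t * r) := by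
  ext x
  simp only [gameBox, Set.mem_ofPred_eq, Set.mem_Icc, Pi.le_def, Pi.add_apply, ← forall_and,
    abs_sub_le_iff, sub_le_iff_le_add, add_comm, and_comm]

lemma isCompact_gameBox (β : Fin n → ℝ) (t r : ℝ) (y : Fin n → ℝ) :
    IsCompact (gameBox β t r y) :=
  gameBox_eq_Icc β t r y ▸ isCompact_Icc

lemma center_mem_gameBox (hβ : ∀ j, 0 ≤ β j) (t : ℝ) {r : ℝ} (hr : 0 ≤ r) (y : Fin n → ℝ) :
    y ∈ gameBox β t r y := fun j => by
  simpa using mul_nonneg (Real.rpow_nonneg (hβ j) t) hr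

lemma gameBox_subset_gameBox {s t r : ℝ} {x y : Fin n → ℝ}
    (h : ∀ j, |x j - y j| ≤ β j ^ s * r - β j ^ t * r) :
    gameBox β t r x ⊆ gameBox β s r y := fun z hz j => by
  linarith [hz j, h j, abs_sub_le (z j) (x j) (y j)]

lemma prod_rpow_mul_const (hβ : ∀ j, 0 ≤ β j) (t r : ℝ) :
    ∏ j, β j ^ t * r = (∏ j, β j) ^ t * r ^ n := by
  rw [Finset.prod_mul_distrib, Real.finsetProd_rpow _ _ fun j _ => hβ j]
  simp

lemma card_mul_prod_le_of_pairwiseDisjoint_Icc {κ ι : Type*} [Fintype κ] {s : Finset ι}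
    {z : ι → κ → ℝ} {l m y : κ → ℝ} (hl : 0 ≤ l) (hm : 0 ≤ m)
    (hs : (s : Set ι).PairwiseDisjoint fun v => Set.Icc (z v - l) (z v + l))
    (hy : ∀ v ∈ s, (Set.Icc (y - m) (y + m) ∩ Set.Icc (z v - l) (z v + l)).Nonempty) :
    s.card * ∏ j, l j ≤ ∏ j, (m j + 2 * l j) := by
  have volume_cube (x r : κ → ℝ) (hr : 0 ≤ r) :
      volume (Set.Icc (x - r) (x + r)) = ENNReal.ofReal (∏ j, 2 * r j) := by
    rw [Real.volume_Icc_pi,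
      ENNReal.ofReal_prod_of_nonneg fun j _ => mul_nonneg zero_le_two (hr j)]
    refine Finset.prod_congr rfl fun j _ => ?_
    simp only [Pi.add_apply, Pi.sub_apply]
    ring_nf
  have hsub : ⋃ v ∈ s, Set.Icc (z v - l) (z v + l) ⊆
      Set.Icc (y - (m + 2 * l)) (y + (m + 2 * l)) := by
    simp only [Set.iUnion_subset_iff]
    rintro v hv x ⟨hx₁, hx₂⟩
    obtain ⟨u, ⟨hu₁, hu₂⟩, hu₃, hu₄⟩ := hy v hv
    simp only [Pi.le_def, Pi.sub_apply, Pi.add_apply, Set.mem_Icc, Pi.mul_apply,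
      Pi.ofNat_apply] at *
    exact ⟨fun j => by linarith [hu₁ j, hu₄ j, hx₁ j], fun j => by linarith [hu₂ j, hu₃ j, hx₂ j]⟩
  have hvol := measure_mono (μ := volume) hsub
  have h2l : 0 ≤ m + 2 * l := add_nonneg hm (mul_nonneg zero_le_two hl)
  rw [measure_biUnion_finset hs fun _ _ => measurableSet_Icc, volume_cube _ _ h2l] at hvol
  simp only [volume_cube _ _ hl, Finset.sum_const, nsmul_eq_mul, Finset.prod_mul_distrib] at hvol
  rw [← ENNReal.ofReal_natCast, ← ENNReal.ofReal_mul (Nat.cast_nonneg _),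
    ENNReal.ofReal_le_ofReal_iff (mul_nonneg (by positivity) (Finset.prod_nonneg fun j _ => h2l j)),
    mul_left_comm] at hvol
  exact le_of_mul_le_mul_left hvol (by positivity)

lemma card_le_of_forall_inter_gameBox_nonempty (hβ : ∀ j, β j ∈ Set.Ioc (0 : ℝ) 1)
    {ρ : ℝ} (hρ : 0 < ρ) {q L : ℝ} {y : Fin n → ℝ} {ι : Type*} {s : Finset ι}
    {z : ι → Fin n → ℝ} (hs : (s : Set ι).PairwiseDisjoint fun v => gameBox β L ρ (z v))
    (hy : ∀ v ∈ s, (gameBox β q ρ y ∩ gameBox β L ρ (z v)).Nonempty) :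
    (s.card : ℝ) ≤ 3 ^ n * max 1 ((∏ j, β j) ^ (q - L)) := by
  have hP : 0 < ∏ j, β j := Finset.prod_pos fun j _ => (hβ j).1
  have hβ₀ : ∀ j, 0 ≤ β j := fun j => (hβ j).1.le
  have hside (t : ℝ) : (0 : Fin n → ℝ) ≤ fun j => β j ^ t * ρ := fun j =>
    mul_nonneg (Real.rpow_nonneg (hβ₀ j) t) hρ.le
  simp only [gameBox_eq_Icc] at hs hy
  have hpack := card_mul_prod_le_of_pairwiseDisjoint_Icc (hside L) (hside q) hs hy
  have hcoarse : ∏ j, (β j ^ q * ρ + 2 * (β j ^ L * ρ)) ≤ ∏ j, β j ^ min q L * (3 * ρ) := by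
    refine Finset.prod_le_prod (fun j _ => ?_) fun j _ => ?_
    · exact add_nonneg (hside q j) (mul_nonneg zero_le_two (hside L j))
    · have hq := Real.rpow_le_rpow_of_exponent_ge (hβ j).1 (hβ j).2 (min_le_left q L)
      have hL := Real.rpow_le_rpow_of_exponent_ge (hβ j).1 (hβ j).2 (min_le_right q L)
      nlinarith
  rw [prod_rpow_mul_const hβ₀] at hpack hcoarse
  have hmin : (∏ j, β j) ^ (min q L - L) ≤ max 1 ((∏ j, β j) ^ (q - L)) := by
    rcases le_total q L with h | h <;> simp [h]
  calc (s.card : ℝ) ≤ (∏ j, β j) ^ min q L * (3 * ρ) ^ n / ((∏ j, β j) ^ L * ρ ^ n) :=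
        (le_div_iff₀ (by positivity)).2 (hpack.trans hcoarse)
    _ = 3 ^ n * (∏ j, β j) ^ (min q L - L) := by
        rw [Real.rpow_sub hP, mul_pow]
        field_simp
    _ ≤ _ := by gcongr

/-! ### Intersections of winning sets -/

lemma isWinning_iInter (hβ : ∀ j, 0 ≤ β j) {c : ℝ} (hc : 0 < c) {I : Type*} [Countable I]
    {αf : I → ℝ} (hαf : ∀ i, 0 ≤ αf i) {α : ℝ} (hα : 0 ≤ α)
    (hsum : HasSum (fun i => αf i ^ c) (α ^ c)) {ρ₂ ρ : ℝ} {S : I → Set (Fin n → ℝ)}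
    (hS : ∀ i, ∃ ρ₁, ρ ≤ ρ₁ ∧ IsWinning β (αf i) c ρ₂ ρ₁ (S i)) :
    IsWinning β α c ρ₂ ρ (⋂ i, S i) := by
  choose ρ₁ hρ σ hlegal hwin using hS
  refine ⟨fun r m b => ⋃ i, σ i r m b, fun r m b hr₂ hr hb => ?_, fun r b hr₂ hr hb x hx hdel => ?_⟩
  · have hL : ∀ i, LegalMove β (αf i) c m (σ i r m b) := fun i =>
      hlegal i r m b hr₂ (hr.trans (hρ i)) hb
    simp only [LegalMove, if_pos hc] at hL ⊢
    refine ⟨Set.countable_iUnion fun i => (hL i).1, fun p hp => ?_, ?_⟩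
    · obtain ⟨i, hi⟩ := Set.mem_iUnion.1 hp
      exact (hL i).2.1 p hi
    have hQ : 0 ≤ ∏ j, β j ^ (m + 1 : ℝ) := Finset.prod_nonneg fun j _ => Real.rpow_nonneg (hβ j) _
    set Q := ∏ j, β j ^ (m + 1 : ℝ)
    calc _ ≤ ∑' i, ∑' p : σ i r m b, ENNReal.ofReal ((∏ j, β j ^ p.1.1) ^ c) :=
          ENNReal.tsum_iUnion_le_tsum
            (fun p : ℝ × (Fin n → ℝ) => ENNReal.ofReal ((∏ j, β j ^ p.1) ^ c)) _
      _ ≤ ∑' i, ENNReal.ofReal ((αf i * Q) ^ c) := ENNReal.tsum_le_tsum fun i => (hL i).2.2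
      _ = ∑' i, ENNReal.ofReal (αf i ^ c * Q ^ c) :=
          tsum_congr fun i => by rw [Real.mul_rpow (hαf i) hQ]
      _ = ENNReal.ofReal (α ^ c * Q ^ c) := by
          rw [← (hsum.mul_right _).tsum_eq, ENNReal.ofReal_tsum_of_nonneg
            (fun i => mul_nonneg (Real.rpow_nonneg (hαf i) c) (Real.rpow_nonneg hQ c))
            (hsum.mul_right _).summable]
      _ = ENNReal.ofReal ((α * Q) ^ c) := by rw [Real.mul_rpow hα hQ]
  · refine Set.mem_iInter.2 fun i => hwin i r b hr₂ (hr.trans (hρ i)) hb x hx fun h => hdel ?_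
    simp only [Set.mem_iUnion] at h ⊢
    obtain ⟨m, p, hp, hxp⟩ := h
    exact ⟨m, p, ⟨i, hp⟩, hxp⟩

/-! ### Strategies and potentials -/

/-- A strategy of Player II once Player I has fixed the radius: the collection of pairs selected in
answer to the centres played so far. Turns are counted from `0`. -/
abbrev Strategy (n : ℕ) := (t : ℕ) → (Fin (t + 1) → Fin n → ℝ) → Set (ℝ × (Fin n → ℝ))

/-- The collection selected by Player II on turn `t` when Player I plays the centres `b`. -/
def reply (σ : Strategy n) (b : ℕ → Fin n → ℝ) (t : ℕ) : Set (ℝ × (Fin n → ℝ)) :=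
  σ t fun i => b i

/-- Player I's box on turn `t`, counted from `0`, so that its exponent is `t + 1`. The play `b` is
legal through turn `t` if `turnBox β ρ b` is antitone on `Set.Iic t`. -/
def turnBox (β : Fin n → ℝ) (ρ : ℝ) (b : ℕ → Fin n → ℝ) (t : ℕ) : Set (Fin n → ℝ) :=
  gameBox β (t + 1) ρ (b t)

/-- The `c`-th powers of the volumes of the boxes selected in `M`, added up in units of the
volume of a box of exponent `L`. The rules of the game bound this quantity on every turn. -/
noncomputable def potential (β : Fin n → ℝ) (c L : ℝ) (M : Set (ℝ × (Fin n → ℝ))) : ℝ≥0∞ :=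
  ∑' p : M, ENNReal.ofReal (((∏ j, β j) ^ (p.1.1 - L)) ^ c)

/-- The pairs of `M` whose boxes meet the box of exponent `L` centred at `x`. -/
def meeting (β : Fin n → ℝ) (ρ : ℝ) (M : Set (ℝ × (Fin n → ℝ))) (L : ℝ) (x : Fin n → ℝ) :
    Set (ℝ × (Fin n → ℝ)) :=
  {p ∈ M | (gameBox β p.1 ρ p.2 ∩ gameBox β L ρ x).Nonempty}

/-- The pairs selected before turn `t` whose boxes meet Player I's box on turn `t`. -/
def threats (β : Fin n → ℝ) (ρ : ℝ) (σ : Strategy n) (b : ℕ → Fin n → ℝ) (t : ℕ) :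
    Set (ℝ × (Fin n → ℝ)) :=
  meeting β ρ (⋃ s < t, reply σ b s) (t + 1) (b t)

/-- Player II's strategy `σ` wins the `(α, A, c, ρ, ρ)`-potential game for the target `S`. -/
structure IsWinningStrategy (β : Fin n → ℝ) (α c ρ : ℝ) (S : Set (Fin n → ℝ))
    (σ : Strategy n) : Prop where
  potential_reply_le : ∀ {b : ℕ → Fin n → ℝ} {t : ℕ}, AntitoneOn (turnBox β ρ b) (Set.Iic t) →
    potential β c (t + 1) (reply σ b t) ≤ ENNReal.ofReal (α ^ c)
  mem_of_forall_notMem : ∀ {b : ℕ → Fin n → ℝ} {x : Fin n → ℝ}, Antitone (turnBox β ρ b) →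
    (∀ t, x ∈ turnBox β ρ b t) → (∀ t, ∀ p ∈ reply σ b t, x ∉ gameBox β p.1 ρ p.2) → x ∈ S

lemma potential_change_level (hβ : ∀ j, 0 < β j) (c L L' : ℝ) (M : Set (ℝ × (Fin n → ℝ))) :
    potential β c L' M = ENNReal.ofReal (((∏ j, β j) ^ (L - L')) ^ c) * potential β c L M := by
  have hP : 0 < ∏ j, β j := Finset.prod_pos fun j _ => hβ j
  rw [potential, potential, ← ENNReal.tsum_mul_left]
  refine tsum_congr fun p => ?_
  rw [← ENNReal.ofReal_mul (by positivity), ← Real.mul_rpow (by positivity) (by positivity),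
    ← Real.rpow_add hP]
  ring_nf

lemma ofReal_le_potential (c L : ℝ) {M : Set (ℝ × (Fin n → ℝ))} {p : ℝ × (Fin n → ℝ)}
    (hp : p ∈ M) : ENNReal.ofReal (((∏ j, β j) ^ (p.1 - L)) ^ c) ≤ potential β c L M :=
  ENNReal.le_tsum (f := fun p : M => ENNReal.ofReal (((∏ j, β j) ^ (p.1.1 - L)) ^ c)) ⟨p, hp⟩

lemma exists_isWinningStrategy (hβ : ∀ j, 0 < β j) {α : ℝ} (hα : 0 ≤ α) {c : ℝ} (hc : 0 < c)
    {ρ : ℝ} {S : Set (Fin n → ℝ)} (h : IsWinning β α c ρ ρ S) :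
    ∃ σ, IsWinningStrategy β α c ρ S σ := by
  obtain ⟨σ, hlegal, hwin⟩ := h
  have hP : 0 < ∏ j, β j := Finset.prod_pos fun j _ => hβ j
  have turnBox_succ (b : ℕ → Fin n → ℝ) (m : ℕ) :
      gameBox β (m + 2) ρ (b (m + 1)) = turnBox β ρ b (m + 1) := by
    rw [turnBox]
    push_cast
    ring_nf
  refine ⟨σ ρ, fun {b t} hb => ?_, fun {b x} hb hx hdel => ?_⟩
  · obtain ⟨-, -, hpot⟩ := hlegal ρ t (fun i => b i) le_rfl le_rfl fun i => by
      rw [Fin.val_succ, Fin.val_castSucc, turnBox_succ]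
      exact hb (Set.mem_Iic.2 i.2.le) (Set.mem_Iic.2 i.2) (Nat.le_succ i)
    simp only [if_pos hc, Real.finsetProd_rpow _ _ fun j _ => (hβ j).le] at hpot
    calc potential β c (t + 1) (reply (σ ρ) b t)
        = ENNReal.ofReal (((∏ j, β j) ^ (0 - (t + 1 : ℝ))) ^ c) *
            potential β c 0 (reply (σ ρ) b t) := potential_change_level hβ c 0 _ _
      _ ≤ ENNReal.ofReal (((∏ j, β j) ^ (0 - (t + 1 : ℝ))) ^ c) *
            ENNReal.ofReal ((α * (∏ j, β j) ^ (t + 1 : ℝ)) ^ c) := by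
          gcongr
          simpa only [potential, reply, sub_zero] using hpot
      _ = ENNReal.ofReal (α ^ c) := by
          rw [← ENNReal.ofReal_mul (by positivity), ← Real.mul_rpow (by positivity) (by positivity),
            mul_left_comm, ← Real.rpow_add hP]
          simp
  · refine hwin ρ b le_rfl le_rfl (fun m => ?_) x hx ?_
    · exact turnBox_succ b m ▸ hb (Nat.le_succ m)
    · simpa only [Set.mem_iUnion, not_exists, reply] using hdel

/-! ### Risk -/

/-- A measure of how badly the boxes selected in `M` obstruct a box of exponent `L`. Truncating
the summands at `1` makes the risks of many disjoint boxes summable even if a large selected box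
meets all of them. -/
noncomputable def risk (β : Fin n → ℝ) (c δ L : ℝ) (M : Set (ℝ × (Fin n → ℝ))) : ℝ≥0∞ :=
  ∑' p : M, ENNReal.ofReal (min 1 (((∏ j, β j) ^ (p.1.1 - L)) ^ c / δ))

lemma risk_mono (c δ L : ℝ) {M M' : Set (ℝ × (Fin n → ℝ))} (h : M ⊆ M') :
    risk β c δ L M ≤ risk β c δ L M' :=
  ENNReal.tsum_mono_subtype
    (fun p : ℝ × (Fin n → ℝ) => ENNReal.ofReal (min 1 (((∏ j, β j) ^ (p.1 - L)) ^ c / δ))) h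

lemma risk_union_le (c δ L : ℝ) (M M' : Set (ℝ × (Fin n → ℝ))) :
    risk β c δ L (M ∪ M') ≤ risk β c δ L M + risk β c δ L M' :=
  ENNReal.tsum_union_le
    (fun p : ℝ × (Fin n → ℝ) => ENNReal.ofReal (min 1 (((∏ j, β j) ^ (p.1 - L)) ^ c / δ))) M M'

lemma risk_biUnion_le (c δ L : ℝ) {ι : Type*} (s : Finset ι) (M : ι → Set (ℝ × (Fin n → ℝ))) :
    risk β c δ L (⋃ k ∈ s, M k) ≤ ∑ k ∈ s, risk β c δ L (M k) :=
  ENNReal.tsum_biUnion_le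
    (fun p : ℝ × (Fin n → ℝ) => ENNReal.ofReal (min 1 (((∏ j, β j) ^ (p.1 - L)) ^ c / δ))) s M

lemma potential_le_of_risk_lt_one {c δ L : ℝ} (hδ : 0 < δ) {M : Set (ℝ × (Fin n → ℝ))}
    (h : risk β c δ L M < 1) : potential β c L M ≤ ENNReal.ofReal δ := by
  have hsmall (p : M) : ((∏ j, β j) ^ (p.1.1 - L)) ^ c / δ < 1 := by
    have hp := (ENNReal.le_tsum p).trans_lt h
    rw [← ENNReal.ofReal_one, ENNReal.ofReal_lt_ofReal_iff one_pos] at hp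
    simpa using hp
  calc potential β c L M = ENNReal.ofReal δ * risk β c δ L M := by
        rw [risk, potential, ← ENNReal.tsum_mul_left]
        refine tsum_congr fun p => ?_
        rw [min_eq_right (hsmall p).le, ← ENNReal.ofReal_mul hδ.le, mul_div_cancel₀ _ hδ.ne']
    _ ≤ ENNReal.ofReal δ := mul_le_of_le_one_right' h.le

open scoped Classical in
lemma sum_risk_meeting_eq (c δ ρ L : ℝ) (M : Set (ℝ × (Fin n → ℝ))) {ι : Type*} (s : Finset ι)
    (z : ι → Fin n → ℝ) :
    ∑ v ∈ s, risk β c δ L (meeting β ρ M L (z v)) =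
      ∑' p : M, ({v ∈ s | (gameBox β p.1.1 ρ p.1.2 ∩ gameBox β L ρ (z v)).Nonempty}.card : ℝ≥0∞) *
        ENNReal.ofReal (min 1 (((∏ j, β j) ^ (p.1.1 - L)) ^ c / δ)) := by
  let f (p : ℝ × (Fin n → ℝ)) := ENNReal.ofReal (min 1 (((∏ j, β j) ^ (p.1 - L)) ^ c / δ))
  let hits (p : ℝ × (Fin n → ℝ)) (v : ι) := (gameBox β p.1 ρ p.2 ∩ gameBox β L ρ (z v)).Nonempty
  calc ∑ v ∈ s, risk β c δ L (meeting β ρ M L (z v))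
      = ∑ v ∈ s, ∑' p : M, if hits p v then f p else 0 := by
        refine Finset.sum_congr rfl fun v _ => ?_
        rw [risk, tsum_subtype _ f, tsum_subtype M fun p => if hits p v then f p else 0]
        refine tsum_congr fun p => ?_
        simp only [meeting, Set.indicator_apply, Set.mem_ofPred_eq, hits, ite_and]
    _ = ∑' p : M, ∑ v ∈ s, if hits p v then f p else 0 :=
        (Summable.tsum_finsetSum fun _ _ => ENNReal.summable).symm
    _ = _ := by simp only [← Finset.sum_filter, Finset.sum_const, nsmul_eq_mul, f, hits]

lemma max_one_mul_min_one_rpow_le {w Y c δ : ℝ} (hw : 0 < w) (hwY : w ≤ Y) (hc : c ≤ 1)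
    (hδ : 0 < δ) : max 1 w * min 1 (w ^ c / δ) ≤ (Y ^ (1 - c) + 1 / δ) * w ^ c := by
  have hw_le : w ≤ Y ^ (1 - c) * w ^ c := by
    calc w = w ^ (1 - c) * w ^ c := by rw [← Real.rpow_add hw, sub_add_cancel, Real.rpow_one]
      _ ≤ Y ^ (1 - c) * w ^ c := by gcongr
  have hratio : 0 < w ^ c / δ := by positivity
  have hmax : max 1 w * min 1 (w ^ c / δ) ≤ w + w ^ c / δ := by
    rcases le_total w 1 with h | h
    · rw [max_eq_left h]
      linarith [min_le_right 1 (w ^ c / δ)]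
    · rw [max_eq_right h]
      nlinarith [min_le_left 1 (w ^ c / δ)]
  calc _ ≤ w + w ^ c / δ := hmax
    _ ≤ Y ^ (1 - c) * w ^ c + w ^ c / δ := by gcongr
    _ = _ := by ring

lemma sum_risk_meeting_le (hβ : ∀ j, β j ∈ Set.Ioc (0 : ℝ) 1) {c : ℝ} (hc : c ∈ Set.Ioc (0 : ℝ) 1)
    {ρ δ Y : ℝ} (hρ : 0 < ρ) (hδ : 0 < δ) (hY : 0 < Y) {L : ℝ} {ι : Type*} {s : Finset ι}
    {z : ι → Fin n → ℝ} (hs : (s : Set ι).PairwiseDisjoint fun v => gameBox β L ρ (z v))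
    {M : Set (ℝ × (Fin n → ℝ))} (hM : potential β c L M ≤ ENNReal.ofReal (Y ^ c)) :
    ∑ v ∈ s, risk β c δ L (meeting β ρ M L (z v)) ≤ ENNReal.ofReal (3 ^ n * (Y + Y ^ c / δ)) := by
  classical
  set K := 3 ^ n * (Y ^ (1 - c) + 1 / δ) with hK
  have term_le (p : M) :
      ({v ∈ s | (gameBox β p.1.1 ρ p.1.2 ∩ gameBox β L ρ (z v)).Nonempty}.card : ℝ≥0∞) *
        ENNReal.ofReal (min 1 (((∏ j, β j) ^ (p.1.1 - L)) ^ c / δ)) ≤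
      ENNReal.ofReal K * ENNReal.ofReal (((∏ j, β j) ^ (p.1.1 - L)) ^ c) := by
    have hcard := card_le_of_forall_inter_gameBox_nonempty hβ hρ (y := p.1.2) (q := p.1.1)
      (hs.subset (Finset.filter_subset _ s)) fun v hv => (Finset.mem_filter.1 hv).2
    have hw : 0 < (∏ j, β j) ^ (p.1.1 - L) :=
      Real.rpow_pos_of_pos (Finset.prod_pos fun j _ => (hβ j).1) _
    have hwY : ((∏ j, β j) ^ (p.1.1 - L)) ^ c ≤ Y ^ c :=
      (ENNReal.ofReal_le_ofReal_iff (by positivity)).1 ((ofReal_le_potential c L p.2).trans hM)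
    set w := (∏ j, β j) ^ (p.1.1 - L)
    replace hwY : w ≤ Y := (Real.rpow_le_rpow_iff hw.le hY.le hc.1).1 hwY
    rw [← ENNReal.ofReal_natCast, ← ENNReal.ofReal_mul (Nat.cast_nonneg _),
      ← ENNReal.ofReal_mul (by positivity), hK, mul_assoc]
    refine ENNReal.ofReal_le_ofReal ?_
    calc _ ≤ 3 ^ n * max 1 w * min 1 (w ^ c / δ) := by gcongr
      _ ≤ _ := by
        rw [mul_assoc]
        exact mul_le_mul_of_nonneg_left (max_one_mul_min_one_rpow_le hw hwY hc.2 hδ) (by positivity)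
  calc ∑ v ∈ s, risk β c δ L (meeting β ρ M L (z v))
      ≤ ∑' p : M, ENNReal.ofReal K * ENNReal.ofReal (((∏ j, β j) ^ (p.1.1 - L)) ^ c) := by
        rw [sum_risk_meeting_eq]
        exact ENNReal.tsum_le_tsum term_le
    _ = ENNReal.ofReal K * potential β c L M := ENNReal.tsum_mul_left
    _ ≤ ENNReal.ofReal K * ENNReal.ofReal (Y ^ c) := by gcongr
    _ = ENNReal.ofReal (3 ^ n * (Y + Y ^ c / δ)) := by
        have hYc : Y ^ (1 - c) * Y ^ c = Y := by
          rw [← Real.rpow_add hY, sub_add_cancel, Real.rpow_one]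
        rw [← ENNReal.ofReal_mul (by positivity)]
        congr 1
        linear_combination (3 : ℝ) ^ n * hYc

/-! ### Descending through a grid of subboxes -/

/-- Passage from level `k + 1` to level `k` in the grid of `subboxCenter`: a box of level `k + 1`
with index `m` lies in the box of level `k` with index `gridParent β m`. -/
noncomputable def gridParent (β : Fin n → ℝ) (m : Fin n → ℕ) : Fin n → ℕ := fun j => ⌊β j * m j⌋₊

/-- The centre of the box with index `m` of the level `k` grid in the box of exponent `t + 1`
centred at `x`. Neighbouring boxes overlap in half of their width, so that every box of a level is
contained in some box of the previous one. -/
def subboxCenter (β : Fin n → ℝ) (ρ : ℝ) (t : ℕ) (x : Fin n → ℝ) (k : ℕ) (m : Fin n → ℕ) :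
    Fin n → ℝ :=
  fun j => x j + β j ^ (t + 1) * ρ * (β j ^ k * (m j + 1) - 1)

/-- The play which follows `b` through turn `t` and then descends in `N` turns to the level `N`
subbox with index `m`, moving on each turn to the ancestor of that subbox. -/
noncomputable def descend (β : Fin n → ℝ) (ρ : ℝ) (t : ℕ) (b : ℕ → Fin n → ℝ) (N : ℕ)
    (m : Fin n → ℕ) (s : ℕ) : Fin n → ℝ :=
  if s ≤ t then b s else subboxCenter β ρ t (b t) (s - t) ((gridParent β)^[N - (s - t)] m)

lemma gridParent_iterate_le (hβ : ∀ j, 0 ≤ β j) (i : ℕ) (m : Fin n → ℕ) (j : Fin n) :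
    ((gridParent β)^[i] m j : ℝ) ≤ β j ^ i * m j := by
  induction i with
  | zero => simp
  | succ i ih =>
    rw [Function.iterate_succ_apply', pow_succ', mul_assoc]
    exact (Nat.floor_le (mul_nonneg (hβ j) (Nat.cast_nonneg _))).trans
      (mul_le_mul_of_nonneg_left ih (hβ j))

lemma abs_mul_succ_sub_gridParent_succ_le {m : Fin n → ℕ} {j : Fin n}
    (hβ : β j ∈ Set.Icc (0 : ℝ) (1 / 2)) :
    |β j * (m j + 1) - (gridParent β m j + 1)| ≤ 1 - β j := by
  have hfloor : (gridParent β m j : ℝ) ≤ β j * m j :=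
    Nat.floor_le (mul_nonneg hβ.1 (Nat.cast_nonneg _))
  have hlt : β j * m j < gridParent β m j + 1 := Nat.lt_floor_add_one _
  rw [abs_le]
  constructor <;> linarith [hβ.2]

lemma gameBox_subboxCenter_succ_subset (hβ : ∀ j, β j ∈ Set.Ioc (0 : ℝ) (1 / 2)) {ρ : ℝ}
    (hρ : 0 ≤ ρ) (t : ℕ) (x : Fin n → ℝ) (k : ℕ) (m : Fin n → ℕ) :
    gameBox β (t + (k + 1 : ℕ) + 1) ρ (subboxCenter β ρ t x (k + 1) m) ⊆
      gameBox β (t + k + 1) ρ (subboxCenter β ρ t x k (gridParent β m)) := by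
  refine gameBox_subset_gameBox fun j => ?_
  obtain ⟨hβ₀, hβ₁⟩ := hβ j
  have hexp (k : ℕ) : β j ^ (t + k + 1 : ℝ) = β j ^ (t + k + 1) := by
    exact_mod_cast Real.rpow_natCast (β j) (t + k + 1)
  have hscale : 0 ≤ β j ^ (t + k + 1) * ρ := by positivity
  calc |subboxCenter β ρ t x (k + 1) m j - subboxCenter β ρ t x k (gridParent β m) j|
      = |β j ^ (t + k + 1) * ρ * (β j * (m j + 1) - (gridParent β m j + 1))| := by
        simp only [subboxCenter]
        ring_nf
    _ ≤ β j ^ (t + k + 1) * ρ * (1 - β j) := by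
        rw [abs_mul, abs_of_nonneg hscale]
        gcongr
        exact abs_mul_succ_sub_gridParent_succ_le ⟨hβ₀.le, hβ₁⟩
    _ = β j ^ (t + k + 1 : ℝ) * ρ - β j ^ (t + (k + 1 : ℕ) + 1 : ℝ) * ρ := by
        rw [hexp, hexp]
        ring

lemma disjoint_gameBox_subboxCenter (hβ : ∀ j, 0 < β j) {ρ : ℝ} (hρ : 0 < ρ) (t : ℕ)
    (x : Fin n → ℝ) (k : ℕ) {m m' : Fin n → ℕ} {j : Fin n} (h : m j + 3 ≤ m' j) :
    Disjoint (gameBox β (t + k + 1) ρ (subboxCenter β ρ t x k m))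
      (gameBox β (t + k + 1) ρ (subboxCenter β ρ t x k m')) := by
  refine Set.disjoint_left.2 fun u hu hu' => ?_
  have hexp : β j ^ (t + k + 1 : ℝ) = β j ^ (t + 1) * β j ^ k := by
    rw [← pow_add, add_right_comm]
    exact_mod_cast Real.rpow_natCast (β j) (t + 1 + k)
  have hside : 0 < β j ^ (t + 1) * β j ^ k * ρ := by
    have := hβ j
    positivity
  have h₁ := (abs_le.1 (hu j)).2
  have h₂ := (abs_le.1 (hu' j)).1
  have h₃ : (m j : ℝ) + 3 ≤ m' j := by exact_mod_cast h
  simp only [subboxCenter, hexp] at h₁ h₂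
  nlinarith

lemma descend_of_le {ρ : ℝ} {t : ℕ} {b : ℕ → Fin n → ℝ} {N : ℕ} {m : Fin n → ℕ} {s : ℕ}
    (hs : s ≤ t) : descend β ρ t b N m s = b s := if_pos hs

lemma descend_add (hβ : ∀ j, 0 ≤ β j) {ρ : ℝ} {t : ℕ} {b : ℕ → Fin n → ℝ} {N : ℕ}
    {m : Fin n → ℕ} (hm : ∀ j, β j ^ N * m j < 1) (k : ℕ) :
    descend β ρ t b N m (t + k) = subboxCenter β ρ t (b t) k ((gridParent β)^[N - k] m) := by
  rcases Nat.eq_zero_or_pos k with rfl | hk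
  · have hroot (j : Fin n) : (gridParent β)^[N] m j = 0 := by
      have := (gridParent_iterate_le hβ N m j).trans_lt (hm j)
      exact Nat.lt_one_iff.1 (by exact_mod_cast this)
    ext j
    simp [descend_of_le, subboxCenter, hroot]
  · rw [descend, if_neg (by lia), Nat.add_sub_cancel_left]

lemma antitoneOn_turnBox_descend (hβ : ∀ j, β j ∈ Set.Ioc (0 : ℝ) (1 / 2)) {ρ : ℝ} (hρ : 0 ≤ ρ)
    {t : ℕ} {b : ℕ → Fin n → ℝ} (hb : AntitoneOn (turnBox β ρ b) (Set.Iic t)) {N : ℕ}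
    {m : Fin n → ℕ} (hm : ∀ j, β j ^ N * m j < 1) :
    AntitoneOn (turnBox β ρ (descend β ρ t b N m)) (Set.Iic (t + N)) := by
  refine antitoneOn_of_add_one_le Set.ordConnected_Iic fun s _ _ hs => ?_
  rcases lt_or_ge s t with hst | hts
  · have := hb (Set.mem_Iic.2 hst.le) (Set.mem_Iic.2 hst) (Nat.le_succ s)
    rwa [turnBox, turnBox, descend_of_le hst.le, descend_of_le (Nat.add_one_le_iff.2 hst)]
  · obtain ⟨k, rfl⟩ := Nat.exists_eq_add_of_le hts
    have hβ₀ : ∀ j, 0 ≤ β j := fun j => (hβ j).1.le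
    have hk : N - k = (N - (k + 1)).succ := by
      have := Set.mem_Iic.1 hs
      lia
    rw [turnBox, turnBox, add_assoc t, descend_add hβ₀ hm, descend_add hβ₀ hm, hk,
      Function.iterate_succ_apply', Nat.cast_add, Nat.cast_add t k]
    exact gameBox_subboxCenter_succ_subset hβ hρ t (b t) k _

lemma pairwiseDisjoint_turnBox_descend (hβ : ∀ j, 0 < β j) {ρ : ℝ} (hρ : 0 < ρ) (t : ℕ)
    (b : ℕ → Fin n → ℝ) {N : ℕ} {s : Set (Fin n → ℕ)}
    (hs : ∀ v ∈ s, ∀ j, β j ^ N * (3 • v) j < 1) :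
    s.PairwiseDisjoint fun v => turnBox β ρ (descend β ρ t b N (3 • v)) (t + N) := by
  intro v hv w hw hvw
  obtain ⟨j, hj⟩ := Function.ne_iff.1 hvw
  have hβ₀ : ∀ j, 0 ≤ β j := fun j => (hβ j).le
  simp only [Function.onFun, turnBox, descend_add hβ₀ (hs v hv), descend_add hβ₀ (hs w hw),
    Nat.sub_self, Function.iterate_zero_apply, Nat.cast_add]
  rcases hj.lt_or_gt with h | h
  · exact disjoint_gameBox_subboxCenter hβ hρ t (b t) N (j := j)
      (by simp only [Pi.smul_apply, smul_eq_mul]; lia)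
  · exact (disjoint_gameBox_subboxCenter hβ hρ t (b t) N (j := j)
      (by simp only [Pi.smul_apply, smul_eq_mul]; lia)).symm

lemma reply_congr (σ : Strategy n) {b b' : ℕ → Fin n → ℝ} {t : ℕ} (h : ∀ s ≤ t, b s = b' s) :
    reply σ b t = reply σ b' t :=
  congrArg (σ t) (funext fun i => h i (Nat.le_of_lt_succ i.2))

lemma reply_descend_congr (hβ : ∀ j, 0 ≤ β j) (σ : Strategy n) (ρ : ℝ) (t : ℕ)
    (b : ℕ → Fin n → ℝ) {N k : ℕ} (hk : k ≤ N) {m m' : Fin n → ℕ}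
    (hm : ∀ j, β j ^ N * m j < 1) (hm' : ∀ j, β j ^ N * m' j < 1)
    (h : (gridParent β)^[N - k] m = (gridParent β)^[N - k] m') :
    reply σ (descend β ρ t b N m) (t + k) = reply σ (descend β ρ t b N m') (t + k) := by
  refine reply_congr σ fun s hs => ?_
  rcases le_total s t with hst | hts
  · rw [descend_of_le hst, descend_of_le hst]
  · obtain ⟨l, rfl⟩ := Nat.exists_eq_add_of_le hts
    have hl : N - l = (k - l) + (N - k) := by lia
    rw [descend_add hβ hm, descend_add hβ hm', hl, Function.iterate_add_apply,
      Function.iterate_add_apply, h]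

lemma threats_descend_subset (hβ : ∀ j, β j ∈ Set.Ioc (0 : ℝ) (1 / 2)) {ρ : ℝ} (hρ : 0 ≤ ρ)
    (σ : Strategy n) {t : ℕ} {b : ℕ → Fin n → ℝ} (hb : AntitoneOn (turnBox β ρ b) (Set.Iic t))
    {N : ℕ} {m : Fin n → ℕ} (hm : ∀ j, β j ^ N * m j < 1) :
    threats β ρ σ (descend β ρ t b N m) (t + N) ⊆
      meeting β ρ (threats β ρ σ b t) (t + N + 1) (descend β ρ t b N m (t + N)) ∪
      ⋃ k ∈ Finset.range N, meeting β ρ (reply σ (descend β ρ t b N m) (t + k)) (t + N + 1)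
        (descend β ρ t b N m (t + N)) := by
  rintro p ⟨hp, hmeet⟩
  push_cast at hmeet
  obtain ⟨s, hs, hps⟩ := Set.mem_iUnion₂.1 hp
  rcases lt_or_ge s t with hst | hts
  · left
    rw [reply_congr σ fun u hu => descend_of_le (hu.trans hst.le)] at hps
    have := antitoneOn_turnBox_descend hβ hρ hb hm (Set.mem_Iic.2 (Nat.le_add_right t N))
      (Set.mem_Iic.2 le_rfl) (Nat.le_add_right t N)
    simp only [turnBox, descend_of_le le_rfl, Nat.cast_add] at this
    exact ⟨⟨Set.mem_iUnion₂.2 ⟨s, hst, hps⟩, hmeet.mono (Set.inter_subset_inter_right _ this)⟩,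
      hmeet⟩
  · obtain ⟨k, rfl⟩ := Nat.exists_eq_add_of_le hts
    exact Or.inr (Set.mem_iUnion₂.2 ⟨k, Finset.mem_range.2 (by lia), hps, hmeet⟩)

/-! ### Parameters -/

lemma one_sub_mul_sum_pow_sub_le_one {r : ℝ} (hr₀ : 0 ≤ r) (hr₁ : r ≤ 1) (N : ℕ) :
    (1 - r) * ∑ k ∈ Finset.range N, r ^ (N - k) ≤ 1 := by
  have hreflect : ∑ k ∈ Finset.range N, r ^ (N - k) = r * ∑ k ∈ Finset.range N, r ^ k := by
    rw [← Finset.sum_range_reflect, Finset.mul_sum]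
    refine Finset.sum_congr rfl fun k hk => ?_
    rw [← pow_succ']
    congr 1
    have := Finset.mem_range.1 hk
    lia
  rw [hreflect, mul_left_comm, mul_neg_geom_sum]
  nlinarith [pow_nonneg hr₀ N]

lemma div_pow_rpow_eq {P : ℝ} (hP : 0 < P) {x : ℝ} (hx : 0 ≤ x) (c : ℝ) (i : ℕ) :
    (x / P ^ i) ^ c = x ^ c * (P ^ (1 - c)) ^ i / P ^ i := by
  rw [Real.div_rpow hx (by positivity), Real.rpow_sub hP, Real.rpow_one, div_pow,
    Real.rpow_pow_comm hP.le]
  field_simp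

lemma le_rpow_self_of_rpow_le_one {x c : ℝ} (hx : 0 ≤ x) (hc₀ : 0 < c) (hc₁ : c ≤ 1)
    (h : x ^ c ≤ 1) : x ≤ x ^ c := by
  have hx₁ : x ≤ 1 := not_lt.1 fun hx₁ => (Real.one_lt_rpow hx₁ hc₀).not_ge h
  simpa using Real.rpow_le_rpow_of_exponent_ge' hx hx₁ hc₀.le hc₁

lemma div_two_lt_floor_div_mul {α δ : ℝ} (hα : 0 < α) (h : α ≤ δ) : δ / 2 < ⌊δ / α⌋₊ * α := by
  have hone : (1 : ℝ) ≤ ⌊δ / α⌋₊ := by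
    exact_mod_cast Nat.floor_pos.2 ((one_le_div hα).2 h)
  have hlt := (div_lt_iff₀ hα).1 (Nat.lt_floor_add_one (δ / α))
  nlinarith

/-- The standing hypotheses on the parameters of the game with matrix `A = diag β`, strategies of
quality `α` and the threshold `δ` for the danger to which Player I may be exposed. -/
structure IsAdmissible (β : Fin n → ℝ) (c α δ : ℝ) : Prop where
  entry_mem : ∀ j, β j ∈ Set.Ioc (0 : ℝ) (1 / 2)
  exponent_mem : c ∈ Set.Ioo (0 : ℝ) 1
  alpha_pos : 0 < α
  delta_mem : δ ∈ Set.Ioc (0 : ℝ) 1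
  alpha_rpow_le : α ^ c ≤ δ ^ 2 * (1 - (∏ j, β j) ^ (1 - c))

namespace IsAdmissible

variable {c α δ : ℝ}

lemma entry_mem_Ioc_one (h : IsAdmissible β c α δ) (j : Fin n) : β j ∈ Set.Ioc (0 : ℝ) 1 :=
  ⟨(h.entry_mem j).1, (h.entry_mem j).2.trans (by norm_num)⟩

lemma prod_pos (h : IsAdmissible β c α δ) : 0 < ∏ j, β j :=
  Finset.prod_pos fun j _ => (h.entry_mem j).1

lemma prod_rpow_lt_one (h : IsAdmissible β c α δ) : (∏ j, β j) ^ (1 - c) < 1 :=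
  sub_pos.1 (pos_of_mul_pos_right ((Real.rpow_pos_of_pos h.alpha_pos c).trans_le h.alpha_rpow_le)
    (sq_nonneg δ))

lemma prod_lt_one (h : IsAdmissible β c α δ) : ∏ j, β j < 1 := by
  by_contra! hP
  exact h.prod_rpow_lt_one.not_ge (Real.one_le_rpow hP (sub_nonneg.2 h.exponent_mem.2.le))

lemma alpha_rpow_le_sq (h : IsAdmissible β c α δ) : α ^ c ≤ δ ^ 2 :=
  h.alpha_rpow_le.trans (mul_le_of_le_one_right (sq_nonneg δ)
    (sub_le_self 1 (Real.rpow_nonneg h.prod_pos.le _)))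

lemma alpha_le_alpha_rpow (h : IsAdmissible β c α δ) : α ≤ α ^ c :=
  le_rpow_self_of_rpow_le_one h.alpha_pos.le h.exponent_mem.1 h.exponent_mem.2.le
    (h.alpha_rpow_le_sq.trans (pow_le_one₀ h.delta_mem.1.le h.delta_mem.2))

lemma alpha_le_delta (h : IsAdmissible β c α δ) : α ≤ δ := by
  nlinarith [h.alpha_le_alpha_rpow, h.alpha_rpow_le_sq, h.delta_mem.1, h.delta_mem.2]

lemma floor_pos (h : IsAdmissible β c α δ) : 0 < ⌊δ / α⌋₊ :=
  Nat.floor_pos.2 ((one_le_div h.alpha_pos).2 h.alpha_le_delta)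

lemma floor_mul_alpha_le (h : IsAdmissible β c α δ) : ⌊δ / α⌋₊ * α ≤ δ :=
  (le_div_iff₀ h.alpha_pos).1 (Nat.floor_le (div_nonneg h.delta_mem.1.le h.alpha_pos.le))

lemma alpha_rpow_mul_sum_le (h : IsAdmissible β c α δ) (N : ℕ) :
    α ^ c * ∑ k ∈ Finset.range N, ((∏ j, β j) ^ (1 - c)) ^ (N - k) ≤ δ ^ 2 := by
  have hr : 0 ≤ (∏ j, β j) ^ (1 - c) := Real.rpow_nonneg h.prod_pos.le _
  calc _ ≤ δ ^ 2 * (1 - (∏ j, β j) ^ (1 - c)) *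
          ∑ k ∈ Finset.range N, ((∏ j, β j) ^ (1 - c)) ^ (N - k) := by
        gcongr
        exact h.alpha_rpow_le
    _ ≤ δ ^ 2 := by
        rw [mul_assoc]
        exact mul_le_of_le_one_right (sq_nonneg δ)
          (one_sub_mul_sum_pow_sub_le_one hr h.prod_rpow_lt_one.le N)

lemma rpow_pow_floor_le (h : IsAdmissible β c α δ) :
    ((∏ j, β j) ^ (1 - c)) ^ ⌊δ / α⌋₊ ≤ 2 * δ := by
  have hsum := h.alpha_rpow_mul_sum_le ⌊δ / α⌋₊
  have hhalf := div_two_lt_floor_div_mul h.alpha_pos h.alpha_le_delta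
  have hr : 0 ≤ (∏ j, β j) ^ (1 - c) := Real.rpow_nonneg h.prod_pos.le _
  set N := ⌊δ / α⌋₊
  set r := (∏ j, β j) ^ (1 - c)
  have hconst : N * r ^ N ≤ ∑ k ∈ Finset.range N, r ^ (N - k) := by
    calc N * r ^ N = ∑ _k ∈ Finset.range N, r ^ N := by simp
      _ ≤ _ := Finset.sum_le_sum fun k _ =>
        pow_le_pow_of_le_one hr h.prod_rpow_lt_one.le (Nat.sub_le N k)
  have hprod : α * (N * r ^ N) ≤ δ ^ 2 :=
    (mul_le_mul h.alpha_le_alpha_rpow hconst (by positivity)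
      (Real.rpow_nonneg h.alpha_pos.le c)).trans hsum
  nlinarith [pow_nonneg hr N, h.delta_mem.1]

lemma sum_branching_error_le (h : IsAdmissible β c α δ) {θ : ℝ} (hθ₀ : 0 ≤ θ) (hθ : θ ^ c = δ) :
    3 ^ n * (θ / (∏ j, β j) ^ ⌊δ / α⌋₊ + (θ / (∏ j, β j) ^ ⌊δ / α⌋₊) ^ c / δ) +
      ∑ k ∈ Finset.range ⌊δ / α⌋₊, 2 ^ n / (∏ j, β j) ^ k *
        (3 ^ n * (α / (∏ j, β j) ^ (⌊δ / α⌋₊ - k) +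
          (α / (∏ j, β j) ^ (⌊δ / α⌋₊ - k)) ^ c / δ)) ≤
      (3 ^ (n + 1) + 2 * 6 ^ n) * δ / (∏ j, β j) ^ ⌊δ / α⌋₊ := by
  have hP := h.prod_pos
  have hδ := h.delta_mem.1
  have hrN := h.rpow_pow_floor_le
  have hsum := h.alpha_rpow_mul_sum_le ⌊δ / α⌋₊
  have hNα := h.floor_mul_alpha_le
  have hθδ : θ ≤ δ :=
    hθ ▸ le_rpow_self_of_rpow_le_one hθ₀ h.exponent_mem.1 h.exponent_mem.2.le
      (hθ.trans_le h.delta_mem.2)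
  simp only [div_pow_rpow_eq hP hθ₀, div_pow_rpow_eq hP h.alpha_pos.le, hθ]
  set N := ⌊δ / α⌋₊
  set P := ∏ j, β j
  set r := P ^ (1 - c)
  have hstage : ∀ k ∈ Finset.range N, 2 ^ n / P ^ k *
      (3 ^ n * (α / P ^ (N - k) + α ^ c * r ^ (N - k) / P ^ (N - k) / δ)) =
      6 ^ n / P ^ N * (α + α ^ c / δ * r ^ (N - k)) := fun k hk => by
    rw [← Nat.add_sub_of_le (Finset.mem_range.1 hk).le, pow_add, Nat.add_sub_cancel_left,
      show (6 : ℝ) = 2 * 3 by norm_num, mul_pow]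
    field_simp
  have hstages : ∑ k ∈ Finset.range N, (α + α ^ c / δ * r ^ (N - k)) ≤ 2 * δ := by
    rw [Finset.sum_add_distrib, ← Finset.mul_sum, Finset.sum_const, Finset.card_range,
      nsmul_eq_mul, div_mul_eq_mul_div, two_mul]
    exact add_le_add hNα ((div_le_iff₀ hδ).2 (by rwa [← sq]))
  rw [Finset.sum_congr rfl hstage, ← Finset.mul_sum]
  calc _ = (3 ^ n * (θ + r ^ N) + 6 ^ n * ∑ k ∈ Finset.range N, (α + α ^ c / δ * r ^ (N - k))) /
          P ^ N := by
        field_simp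
    _ ≤ (3 ^ n * (δ + 2 * δ) + 6 ^ n * (2 * δ)) / P ^ N := by gcongr
    _ = _ := by ring

end IsAdmissible

/-! ### Safe extensions of a play -/

/-- Player I has played legally through turn `t`, and the boxes selected so far which meet the
current box are small in total. -/
structure IsGood (β : Fin n → ℝ) (c δ ρ : ℝ) (σ : Strategy n) (b : ℕ → Fin n → ℝ) (t : ℕ) :
    Prop where
  antitoneOn : AntitoneOn (turnBox β ρ b) (Set.Iic t)
  potential_threats_le : potential β c (t + 1) (threats β ρ σ b t) ≤ ENNReal.ofReal δ

lemma isGood_zero (β : Fin n → ℝ) (c δ ρ : ℝ) (σ : Strategy n) (b : ℕ → Fin n → ℝ) :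
    IsGood β c δ ρ σ b 0 where
  antitoneOn := fun s hs s' hs' _ => by rw [Nat.le_zero.1 hs, Nat.le_zero.1 hs']
  potential_threats_le := by simp [threats, meeting, potential]

lemma IsGood.congr {c δ ρ : ℝ} {σ : Strategy n} {b b' : ℕ → Fin n → ℝ} {t : ℕ}
    (h : IsGood β c δ ρ σ b t) (hb : ∀ s ≤ t, b s = b' s) : IsGood β c δ ρ σ b' t where
  antitoneOn := h.antitoneOn.congr fun s hs => by rw [turnBox, turnBox, hb s hs]
  potential_threats_le := by
    have hreply : ⋃ s < t, reply σ b s = ⋃ s < t, reply σ b' s :=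
      Set.iUnion₂_congr fun s hs => reply_congr σ fun u hu => hb u (hu.trans hs.le)
    simpa only [threats, hreply, hb t le_rfl] using h.potential_threats_le

/-- The indices `v` such that the level `N` box with index `3 • v` is used for branching; the
factor `3` separates these boxes from each other. -/
noncomputable def leaves (β : Fin n → ℝ) (N : ℕ) : Finset (Fin n → ℕ) :=
  Fintype.piFinset fun j => Finset.range ⌈(3 * β j ^ N)⁻¹⌉₊

lemma pow_mul_lt_one_of_mem_leaves (hβ : ∀ j, 0 < β j) {N : ℕ} {v : Fin n → ℕ}
    (hv : v ∈ leaves β N) (j : Fin n) : β j ^ N * (3 • v) j < 1 := by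
  have hvj := Nat.lt_ceil.1 (Finset.mem_range.1 (Fintype.mem_piFinset.1 hv j))
  have hpos : 0 < 3 * β j ^ N := mul_pos three_pos (pow_pos (hβ j) N)
  rw [← one_div, lt_div_iff₀ hpos] at hvj
  push_cast [Pi.smul_apply, smul_eq_mul]
  linarith

lemma le_card_leaves (hβ : ∀ j, 0 < β j) (N : ℕ) :
    (3 : ℝ)⁻¹ ^ n / (∏ j, β j) ^ N ≤ (leaves β N).card := by
  rw [leaves, Fintype.card_piFinset, Nat.cast_prod]
  calc (3 : ℝ)⁻¹ ^ n / (∏ j, β j) ^ N = ∏ j, (3 * β j ^ N)⁻¹ := by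
        simp [Finset.prod_mul_distrib, Finset.prod_pow, div_eq_inv_mul, mul_comm]
    _ ≤ _ := by
        refine Finset.prod_le_prod (fun j _ => ?_) fun j _ => ?_
        · have := hβ j
          positivity
        · simpa using Nat.le_ceil _

lemma card_image_gridParent_le (hβ : ∀ j, β j ∈ Set.Ioc (0 : ℝ) 1) {N k : ℕ} (hk : k ≤ N) :
    (((leaves β N).image fun v => (gridParent β)^[N - k] (3 • v)).card : ℝ) ≤
      2 ^ n / (∏ j, β j) ^ k := by
  have hpow (k : ℕ) (j : Fin n) : 0 < β j ^ k := pow_pos (hβ j).1 k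
  have hsub : (leaves β N).image (fun v => (gridParent β)^[N - k] (3 • v)) ⊆
      Fintype.piFinset fun j => Finset.range ⌈(β j ^ k)⁻¹⌉₊ := by
    refine Finset.image_subset_iff.2 fun v hv => Fintype.mem_piFinset.2 fun j => ?_
    rw [Finset.mem_range, Nat.lt_ceil, ← one_div, lt_div_iff₀' (hpow k j)]
    calc β j ^ k * ((gridParent β)^[N - k] (3 • v) j : ℝ)
        ≤ β j ^ k * (β j ^ (N - k) * (3 • v) j) := by
          gcongr
          · exact (hpow k j).le
          · exact gridParent_iterate_le (fun j => (hβ j).1.le) _ _ j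
      _ = β j ^ N * (3 • v) j := by rw [← mul_assoc, ← pow_add, Nat.add_sub_of_le hk]
      _ < 1 := pow_mul_lt_one_of_mem_leaves (fun j => (hβ j).1) hv j
  calc _ ≤ ((Fintype.piFinset fun j => Finset.range ⌈(β j ^ k)⁻¹⌉₊).card : ℝ) := by
        exact_mod_cast Finset.card_le_card hsub
    _ = ∏ j, (⌈(β j ^ k)⁻¹⌉₊ : ℝ) := by simp
    _ ≤ ∏ j, 2 * (β j ^ k)⁻¹ := by
        refine Finset.prod_le_prod (fun j _ => Nat.cast_nonneg _) fun j _ => ?_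
        have := (one_le_inv₀ (hpow k j)).2 (pow_le_one₀ (hβ j).1.le (hβ j).2)
        linarith [Nat.ceil_lt_add_one (zero_le_one.trans this)]
    _ = 2 ^ n / (∏ j, β j) ^ k := by
        simp [Finset.prod_mul_distrib, Finset.prod_pow, div_eq_mul_inv]

lemma potential_add_le (hβ : ∀ j, 0 < β j) {c L Y : ℝ} (hY : 0 ≤ Y)
    {M : Set (ℝ × (Fin n → ℝ))} (hM : potential β c L M ≤ ENNReal.ofReal (Y ^ c)) (i : ℕ) :
    potential β c (L + i) M ≤ ENNReal.ofReal ((Y / (∏ j, β j) ^ i) ^ c) := by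
  have hP : 0 < ∏ j, β j := Finset.prod_pos fun j _ => hβ j
  have hexp : (∏ j, β j) ^ (L - (L + i)) = ((∏ j, β j) ^ i)⁻¹ := by
    rw [sub_add_cancel_left, Real.rpow_neg hP.le, Real.rpow_natCast]
  calc potential β c (L + i) M
      ≤ ENNReal.ofReal ((((∏ j, β j) ^ i)⁻¹) ^ c) * ENNReal.ofReal (Y ^ c) := by
        rw [potential_change_level hβ c L, hexp]
        gcongr
    _ = _ := by
        rw [← ENNReal.ofReal_mul (by positivity), ← Real.mul_rpow (by positivity) hY, mul_comm,
          div_eq_mul_inv]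

/-- The play which follows `b` through turn `t` and then descends in `N` turns to the leaf `v`. -/
noncomputable abbrev leafPlay (β : Fin n → ℝ) (ρ : ℝ) (t : ℕ) (b : ℕ → Fin n → ℝ) (N : ℕ)
    (v : Fin n → ℕ) : ℕ → Fin n → ℝ :=
  descend β ρ t b N (3 • v)

/-- The risk which Player II's move on turn `t + k` poses to the leaf `v`. -/
noncomputable def replyRisk (β : Fin n → ℝ) (c δ ρ : ℝ) (σ : Strategy n) (t : ℕ)
    (b : ℕ → Fin n → ℝ) (N k : ℕ) (v : Fin n → ℕ) : ℝ≥0∞ :=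
  risk β c δ (t + N + 1) (meeting β ρ (reply σ (leafPlay β ρ t b N v) (t + k)) (t + N + 1)
    (leafPlay β ρ t b N v (t + N)))

section Extension

variable {c α δ ρ : ℝ} {S : Set (Fin n → ℝ)} {σ : Strategy n} {t N : ℕ} {b : ℕ → Fin n → ℝ}

lemma pairwiseDisjoint_leaves (hβ : ∀ j, 0 < β j) (hρ : 0 < ρ) (t N : ℕ) (b : ℕ → Fin n → ℝ) :
    (leaves β N : Set (Fin n → ℕ)).PairwiseDisjoint fun v =>
      gameBox β (t + N + 1) ρ (leafPlay β ρ t b N v (t + N)) := by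
  simpa only [turnBox, Nat.cast_add] using pairwiseDisjoint_turnBox_descend hβ hρ t b
    fun v hv => pow_mul_lt_one_of_mem_leaves hβ hv

lemma sum_replyRisk_le_of_gridParent_eq (h : IsAdmissible β c α δ) (hρ : 0 < ρ)
    (hσ : IsWinningStrategy β α c ρ S σ) (hb : AntitoneOn (turnBox β ρ b) (Set.Iic t)) {k : ℕ}
    (hk : k ≤ N) {s : Finset (Fin n → ℕ)} (hs : s ⊆ leaves β N) {w : Fin n → ℕ}
    (hw : w ∈ leaves β N)
    (hsw : ∀ v ∈ s, (gridParent β)^[N - k] (3 • v) = (gridParent β)^[N - k] (3 • w)) :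
    ∑ v ∈ s, replyRisk β c δ ρ σ t b N k v ≤ ENNReal.ofReal (3 ^ n *
      (α / (∏ j, β j) ^ (N - k) + (α / (∏ j, β j) ^ (N - k)) ^ c / δ)) := by
  have hβ₀ : ∀ j, 0 < β j := fun j => (h.entry_mem j).1
  have hreply : ∀ v ∈ s,
      reply σ (leafPlay β ρ t b N v) (t + k) = reply σ (leafPlay β ρ t b N w) (t + k) :=
    fun v hv => reply_descend_congr (fun j => (hβ₀ j).le) σ ρ t b hk
      (pow_mul_lt_one_of_mem_leaves hβ₀ (hs hv)) (pow_mul_lt_one_of_mem_leaves hβ₀ hw) (hsw v hv)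
  have hlegal := (antitoneOn_turnBox_descend h.entry_mem hρ.le hb
    (pow_mul_lt_one_of_mem_leaves hβ₀ hw)).mono (Set.Iic_subset_Iic.2 (Nat.add_le_add_left hk t))
  have hpot := potential_add_le hβ₀ h.alpha_pos.le (hσ.potential_reply_le hlegal) (N - k)
  have hlevel : ((t + k : ℕ) + 1 + (N - k : ℕ) : ℝ) = t + N + 1 := by
    push_cast [hk]
    ring
  rw [hlevel] at hpot
  rw [Finset.sum_congr rfl fun v hv => by rw [replyRisk, hreply v hv]]
  exact sum_risk_meeting_le h.entry_mem_Ioc_one ⟨h.exponent_mem.1, h.exponent_mem.2.le⟩ hρ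
    h.delta_mem.1 (div_pos h.alpha_pos (pow_pos h.prod_pos _))
    ((pairwiseDisjoint_leaves hβ₀ hρ t N b).subset hs) hpot

lemma sum_replyRisk_le (h : IsAdmissible β c α δ) (hρ : 0 < ρ)
    (hσ : IsWinningStrategy β α c ρ S σ) (hb : AntitoneOn (turnBox β ρ b) (Set.Iic t)) {k : ℕ}
    (hk : k ≤ N) :
    ∑ v ∈ leaves β N, replyRisk β c δ ρ σ t b N k v ≤ ENNReal.ofReal (2 ^ n / (∏ j, β j) ^ k *
      (3 ^ n * (α / (∏ j, β j) ^ (N - k) + (α / (∏ j, β j) ^ (N - k)) ^ c / δ))) := by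
  set K := 3 ^ n * (α / (∏ j, β j) ^ (N - k) + (α / (∏ j, β j) ^ (N - k)) ^ c / δ)
  have hK : 0 ≤ K := by
    have := h.prod_pos
    have := h.alpha_pos
    have := h.delta_mem.1
    positivity
  let ancestor (v : Fin n → ℕ) := (gridParent β)^[N - k] (3 • v)
  have fiber_le : ∀ u ∈ (leaves β N).image ancestor,
      ∑ v ∈ leaves β N with ancestor v = u, replyRisk β c δ ρ σ t b N k v ≤
        ENNReal.ofReal K := by
    intro _ hu
    obtain ⟨w, hw, rfl⟩ := Finset.mem_image.1 hu
    exact sum_replyRisk_le_of_gridParent_eq h hρ hσ hb hk (Finset.filter_subset _ _) hw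
      fun v hv => (Finset.mem_filter.1 hv).2
  calc _ = ∑ u ∈ (leaves β N).image ancestor,
          ∑ v ∈ leaves β N with ancestor v = u, replyRisk β c δ ρ σ t b N k v :=
        (Finset.sum_fiberwise_of_maps_to (fun v hv => Finset.mem_image_of_mem ancestor hv) _).symm
    _ ≤ ∑ _u ∈ (leaves β N).image ancestor, ENNReal.ofReal K := Finset.sum_le_sum fiber_le
    _ = ENNReal.ofReal (((leaves β N).image ancestor).card * K) := by
        rw [Finset.sum_const, nsmul_eq_mul, ENNReal.ofReal_mul (Nat.cast_nonneg _),
          ENNReal.ofReal_natCast]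
    _ ≤ _ := ENNReal.ofReal_le_ofReal
        (mul_le_mul_of_nonneg_right (card_image_gridParent_le h.entry_mem_Ioc_one hk) hK)

lemma sum_risk_threats_le (h : IsAdmissible β c α δ) (hρ : 0 < ρ)
    (hσ : IsWinningStrategy β α c ρ S σ) (hb : IsGood β c δ ρ σ b t) :
    ∑ v ∈ leaves β ⌊δ / α⌋₊, risk β c δ (t + ⌊δ / α⌋₊ + 1)
        (threats β ρ σ (leafPlay β ρ t b ⌊δ / α⌋₊ v) (t + ⌊δ / α⌋₊)) ≤
      ENNReal.ofReal ((3 ^ (n + 1) + 2 * 6 ^ n) * δ / (∏ j, β j) ^ ⌊δ / α⌋₊) := by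
  obtain ⟨θ, hθ₀, hθ⟩ : ∃ θ : ℝ, 0 < θ ∧ θ ^ c = δ :=
    ⟨δ ^ c⁻¹, Real.rpow_pos_of_pos h.delta_mem.1 _,
      Real.rpow_inv_rpow h.delta_mem.1.le h.exponent_mem.1.ne'⟩
  have hnum := h.sum_branching_error_le hθ₀.le hθ
  have hP := h.prod_pos
  have hα := h.alpha_pos
  have hδ := h.delta_mem.1
  have hβ₀ : ∀ j, 0 < β j := fun j => (h.entry_mem j).1
  set N := ⌊δ / α⌋₊
  have hold : ∑ v ∈ leaves β N, risk β c δ (t + N + 1)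
      (meeting β ρ (threats β ρ σ b t) (t + N + 1) (leafPlay β ρ t b N v (t + N))) ≤
      ENNReal.ofReal (3 ^ n * (θ / (∏ j, β j) ^ N + (θ / (∏ j, β j) ^ N) ^ c / δ)) := by
    have hpot := potential_add_le hβ₀ hθ₀.le (hb.potential_threats_le.trans_eq (by rw [hθ])) N
    rw [add_right_comm] at hpot
    exact sum_risk_meeting_le h.entry_mem_Ioc_one ⟨h.exponent_mem.1, h.exponent_mem.2.le⟩ hρ hδ
      (by positivity) (pairwiseDisjoint_leaves hβ₀ hρ t N b) hpot
  calc _ ≤ ∑ v ∈ leaves β N, (risk β c δ (t + N + 1)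
            (meeting β ρ (threats β ρ σ b t) (t + N + 1) (leafPlay β ρ t b N v (t + N))) +
          ∑ k ∈ Finset.range N, replyRisk β c δ ρ σ t b N k v) :=
        Finset.sum_le_sum fun v hv => (risk_mono c δ _ (threats_descend_subset h.entry_mem hρ.le σ
          hb.antitoneOn (pow_mul_lt_one_of_mem_leaves hβ₀ hv))).trans
          ((risk_union_le c δ _ _ _).trans (add_le_add_right (risk_biUnion_le c δ _ _ _) _))
    _ ≤ ENNReal.ofReal (3 ^ n * (θ / (∏ j, β j) ^ N + (θ / (∏ j, β j) ^ N) ^ c / δ)) +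
          ∑ k ∈ Finset.range N, ENNReal.ofReal (2 ^ n / (∏ j, β j) ^ k *
            (3 ^ n * (α / (∏ j, β j) ^ (N - k) + (α / (∏ j, β j) ^ (N - k)) ^ c / δ))) := by
        rw [Finset.sum_add_distrib, Finset.sum_comm]
        exact add_le_add hold (Finset.sum_le_sum fun k hk =>
          sum_replyRisk_le h hρ hσ hb.antitoneOn (Finset.mem_range.1 hk).le)
    _ ≤ _ := by
        rw [← ENNReal.ofReal_sum_of_nonneg fun k _ => by positivity,
          ← ENNReal.ofReal_add (by positivity) (Finset.sum_nonneg fun k _ => by positivity)]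
        exact ENNReal.ofReal_le_ofReal hnum

open scoped Classical in
lemma le_card_safe_leaves (h : IsAdmissible β c α δ) (hρ : 0 < ρ)
    (hσ : IsWinningStrategy β α c ρ S σ) (hb : IsGood β c δ ρ σ b t) :
    ((3 : ℝ)⁻¹ ^ n - (3 ^ (n + 1) + 2 * 6 ^ n) * δ) / (∏ j, β j) ^ ⌊δ / α⌋₊ ≤
      {v ∈ leaves β ⌊δ / α⌋₊ | risk β c δ (t + ⌊δ / α⌋₊ + 1)
        (threats β ρ σ (leafPlay β ρ t b ⌊δ / α⌋₊ v) (t + ⌊δ / α⌋₊)) < 1}.card := by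
  have htotal := sum_risk_threats_le h hρ hσ hb
  have hleaves := le_card_leaves (fun j => (h.entry_mem j).1) ⌊δ / α⌋₊
  set f : (Fin n → ℕ) → ℝ≥0∞ := fun v => risk β c δ (t + ⌊δ / α⌋₊ + 1)
    (threats β ρ σ (leafPlay β ρ t b ⌊δ / α⌋₊ v) (t + ⌊δ / α⌋₊))
  have hbad : (({v ∈ leaves β ⌊δ / α⌋₊ | ¬ f v < 1}.card : ℝ)) ≤
      (3 ^ (n + 1) + 2 * 6 ^ n) * δ / (∏ j, β j) ^ ⌊δ / α⌋₊ := by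
    have hP := h.prod_pos
    have hδ := h.delta_mem.1
    rw [← ENNReal.ofReal_le_ofReal_iff (by positivity), ENNReal.ofReal_natCast]
    calc _ = ∑ v ∈ leaves β ⌊δ / α⌋₊ with ¬ f v < 1, (1 : ℝ≥0∞) := by simp
      _ ≤ ∑ v ∈ leaves β ⌊δ / α⌋₊ with ¬ f v < 1, f v :=
        Finset.sum_le_sum fun v hv => not_lt.1 (Finset.mem_filter.1 hv).2
      _ ≤ ∑ v ∈ leaves β ⌊δ / α⌋₊, f v :=
        Finset.sum_le_sum_of_subset (Finset.filter_subset _ _)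
      _ ≤ _ := htotal
  have hsplit : (({v ∈ leaves β ⌊δ / α⌋₊ | f v < 1}.card : ℝ)) +
      {v ∈ leaves β ⌊δ / α⌋₊ | ¬ f v < 1}.card = (leaves β ⌊δ / α⌋₊).card := by
    exact_mod_cast Finset.card_filter_add_card_filter_not _
  rw [sub_div]
  linarith

lemma exists_good_extensions (h : IsAdmissible β c α δ) (hρ : 0 < ρ)
    (hσ : IsWinningStrategy β α c ρ S σ) (hb : IsGood β c δ ρ σ b t) {R : ℕ}
    (hR : (R : ℝ) < ((3 : ℝ)⁻¹ ^ n - (3 ^ (n + 1) + 2 * 6 ^ n) * δ) /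
      (∏ j, β j) ^ ⌊δ / α⌋₊ + 1) :
    ∃ e : Fin R → ℕ → Fin n → ℝ, (∀ i, ∀ s ≤ t, e i s = b s) ∧
      (∀ i, IsGood β c δ ρ σ (e i) (t + ⌊δ / α⌋₊)) ∧
      ∀ i i', i ≠ i' →
        Disjoint (turnBox β ρ (e i) (t + ⌊δ / α⌋₊)) (turnBox β ρ (e i') (t + ⌊δ / α⌋₊)) := by
  classical
  have hβ₀ : ∀ j, 0 < β j := fun j => (h.entry_mem j).1
  have hcard := hR.trans_le (add_le_add_left (le_card_safe_leaves h hρ hσ hb) 1)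
  set safe := {v ∈ leaves β ⌊δ / α⌋₊ | risk β c δ (t + ⌊δ / α⌋₊ + 1)
    (threats β ρ σ (leafPlay β ρ t b ⌊δ / α⌋₊ v) (t + ⌊δ / α⌋₊)) < 1}
  have hRcard : R ≤ safe.card := Nat.lt_succ_iff.1 (by exact_mod_cast hcard)
  let g : Fin R ↪ safe := (Fin.castLEEmb hRcard).trans safe.equivFin.symm.toEmbedding
  have hg (i : Fin R) := Finset.mem_filter.1 (g i).2
  refine ⟨fun i => leafPlay β ρ t b ⌊δ / α⌋₊ (g i), fun i s hs => descend_of_le hs,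
    fun i => ⟨antitoneOn_turnBox_descend h.entry_mem hρ.le hb.antitoneOn
      (pow_mul_lt_one_of_mem_leaves hβ₀ (hg i).1), ?_⟩, fun i i' hi => ?_⟩
  · rw [Nat.cast_add]
    exact potential_le_of_risk_lt_one h.delta_mem.1 (hg i).2
  · simpa only [turnBox, Nat.cast_add] using pairwiseDisjoint_leaves hβ₀ hρ t ⌊δ / α⌋₊ b
      (hg i).1 (hg i').1 fun hgi => hi (g.injective (Subtype.ext hgi))

end Extension

/-! ### Branching families of plays -/

lemma exists_branching_sequences {X ι : Type*} {N : ℕ} (hN : 0 < N) {G : ℕ → (ℕ → X) → Prop}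
    {D : ℕ → X → X → Prop}
    (congr : ∀ {t b b'}, G t b → (∀ s ≤ t, b s = b' s) → G t b')
    (extend : ∀ t b, G t b → ∃ e : ι → ℕ → X, (∀ i, ∀ s ≤ t, e i s = b s) ∧
      (∀ i, G (t + N) (e i)) ∧ ∀ i i', i ≠ i' → D (t + N) (e i (t + N)) (e i' (t + N)))
    {b₀ : ℕ → X} (h₀ : G 0 b₀) :
    ∃ play : (ℕ → ι) → ℕ → X, (∀ ω, play ω 0 = b₀ 0) ∧ (∀ ω M, G (M * N) (play ω)) ∧
      (∀ {M ω ω'}, (∀ i < M, ω i = ω' i) → play ω (M * N) = play ω' (M * N)) ∧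
      ∀ {M ω ω'}, (∀ i < M, ω i = ω' i) → ω M ≠ ω' M →
        D ((M + 1) * N) (play ω ((M + 1) * N)) (play ω' ((M + 1) * N)) := by
  have : Nonempty X := ⟨b₀ 0⟩
  choose! e e_eq e_good e_disj using extend
  let stage (ω : ℕ → ι) (M : ℕ) : ℕ → X := Nat.rec b₀ (fun M b => e (M * N) b (ω M)) M
  have stage_good ω M : G (M * N) (stage ω M) := by
    induction M with
    | zero => exact (Nat.zero_mul N).symm ▸ h₀
    | succ M ih => simpa only [Nat.succ_mul] using e_good _ _ ih (ω M)
  have stage_eq ω {M M'} (h : M ≤ M') : ∀ s ≤ M * N, stage ω M' s = stage ω M s := by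
    induction M', h using Nat.le_induction with
    | base => exact fun _ _ => rfl
    | succ M' hM' ih =>
      exact fun s hs => (e_eq _ _ (stage_good ω M') _ s
        (hs.trans (Nat.mul_le_mul_right N hM'))).trans (ih s hs)
  have stage_congr {M ω ω'} (h : ∀ i < M, ω i = ω' i) : stage ω M = stage ω' M := by
    induction M with
    | zero => rfl
    | succ M ih =>
      simp only [stage, h M M.lt_succ_self] at ih ⊢
      rw [ih fun i hi => h i (hi.trans M.lt_succ_self)]
  have diagonal_eq ω {M s} (hs : s ≤ M * N) : stage ω s s = stage ω M s := by
    rcases le_total s M with h | h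
    · exact (stage_eq ω h s (Nat.le_mul_of_pos_right s hN)).symm
    · exact stage_eq ω h s hs
  refine ⟨fun ω s => stage ω s s, fun _ => rfl, fun ω M => ?_, fun {M ω ω'} h => ?_,
    fun {M ω ω'} h hM => ?_⟩
  · exact congr (stage_good ω M) fun s hs => (diagonal_eq ω hs).symm
  · change stage ω _ _ = stage ω' _ _
    rw [diagonal_eq ω le_rfl, diagonal_eq ω' le_rfl, stage_congr h]
  · change D _ (stage ω _ _) (stage ω' _ _)
    rw [diagonal_eq ω le_rfl, diagonal_eq ω' le_rfl]
    simpa only [stage, Nat.succ_mul, ← stage_congr h] using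
      e_disj _ _ (stage_good ω M) (ω M) (ω' M) hM

/-- Plays of Player I indexed by digit sequences: `N` turns are determined by each further digit,
and plays with different digits end up in disjoint boxes. -/
structure IsBranching {ι : Type*} (β : Fin n → ℝ) (ρ : ℝ) (N : ℕ)
    (play : (ℕ → ι) → ℕ → Fin n → ℝ) : Prop where
  antitone : ∀ ω, Antitone (turnBox β ρ (play ω))
  eq_of_forall_lt : ∀ {M : ℕ} {ω ω' : ℕ → ι}, (∀ i < M, ω i = ω' i) →
    play ω (M * N) = play ω' (M * N)
  disjoint_succ : ∀ {M : ℕ} {ω ω' : ℕ → ι}, (∀ i < M, ω i = ω' i) → ω M ≠ ω' M →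
    Disjoint (turnBox β ρ (play ω) ((M + 1) * N)) (turnBox β ρ (play ω') ((M + 1) * N))

lemma IsBranching.disjoint {ι : Type*} {ρ : ℝ} {N : ℕ} {play : (ℕ → ι) → ℕ → Fin n → ℝ}
    (h : IsBranching β ρ N play) {M : ℕ} {ω ω' : ℕ → ι} (hω : ∃ i < M, ω i ≠ ω' i) :
    Disjoint (turnBox β ρ (play ω) (M * N)) (turnBox β ρ (play ω') (M * N)) := by
  classical
  obtain ⟨hlt, hne⟩ := Nat.find_spec hω
  have heq : ∀ i < Nat.find hω, ω i = ω' i := fun i hi =>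
    by_contra fun hi' => Nat.find_min hω hi ⟨hi.trans hlt, hi'⟩
  have hle : (Nat.find hω + 1) * N ≤ M * N := Nat.mul_le_mul_right N hlt
  exact (h.disjoint_succ heq hne).mono (h.antitone ω hle) (h.antitone ω' hle)

lemma exists_forall_mem_turnBox (hβ : ∀ j, 0 ≤ β j) {ρ : ℝ} (hρ : 0 ≤ ρ) {b : ℕ → Fin n → ℝ}
    (hb : Antitone (turnBox β ρ b)) : ∃ x, ∀ t, x ∈ turnBox β ρ b t := by
  simpa only [Set.Nonempty, Set.mem_iInter] using
    IsCompact.nonempty_iInter_of_sequence_nonempty_isCompact_isClosed (turnBox β ρ b)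
      (fun t => hb t.le_succ) (fun t => ⟨b t, center_mem_gameBox hβ _ hρ _⟩)
      (isCompact_gameBox _ _ _ _) fun t => (isCompact_gameBox _ _ _ _).isClosed

lemma notMem_gameBox_of_forall_isGood (hβ : ∀ j, 0 < β j) (hP : ∏ j, β j < 1) {c δ ρ : ℝ}
    (hc : 0 < c) {σ : Strategy n} {b : ℕ → Fin n → ℝ} {N : ℕ} (hN : 0 < N)
    (hb : ∀ M, IsGood β c δ ρ σ b (M * N)) {x : Fin n → ℝ} (hx : ∀ t, x ∈ turnBox β ρ b t)
    {s : ℕ} {p : ℝ × (Fin n → ℝ)} (hp : p ∈ reply σ b s) : x ∉ gameBox β p.1 ρ p.2 := by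
  intro hxp
  have hP₀ : 0 < ∏ j, β j := Finset.prod_pos fun j _ => hβ j
  have hexp : Filter.Tendsto (fun t : ℕ => p.1 - (t + 1 : ℝ)) Filter.atTop Filter.atBot :=
    tendsto_const_nhds.add_atBot <| Filter.tendsto_neg_atTop_atBot.comp <|
      Filter.tendsto_atTop_add_const_right _ _ tendsto_natCast_atTop_atTop
  have hlim : Filter.Tendsto (fun t : ℕ => ((∏ j, β j) ^ (p.1 - (t + 1 : ℝ))) ^ c)
      Filter.atTop Filter.atTop :=
    (tendsto_rpow_atTop hc).comp ((tendsto_rpow_atBot_of_base_lt_one _ hP₀ hP).comp hexp)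
  obtain ⟨T, hT⟩ := Filter.eventually_atTop.1 (hlim.eventually_gt_atTop δ)
  set t := (max T (s + 1)) * N
  have hle : max T (s + 1) ≤ t := Nat.le_mul_of_pos_right _ hN
  have hthreat : p ∈ threats β ρ σ b t :=
    ⟨Set.mem_iUnion₂.2 ⟨s, (le_max_right T (s + 1)).trans hle, hp⟩, x, hxp, hx t⟩
  refine ((ofReal_le_potential c _ hthreat).trans (hb _).potential_threats_le).not_gt ?_
  exact (ENNReal.ofReal_lt_ofReal_iff (by positivity)).2 (hT t ((le_max_left _ _).trans hle))

/-! ### Hausdorff dimension of the set of outcomes -/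

/-- The mass distribution principle. -/
lemma le_dimH_of_forall_measure_closedBall_le {X : Type*} [MetricSpace X] [MeasurableSpace X]
    [BorelSpace X] {μ : Measure X} {s : ℝ} {C : ℝ≥0∞} (hC : C ≠ ∞) {r : ℝ} (hr : 0 < r)
    (hμ : ∀ x, ∀ d ∈ Set.Ioc 0 r, μ (Metric.closedBall x d) ≤ C * ENNReal.ofReal d ^ s)
    {A : Set X} (hA : μ A ≠ 0) : ENNReal.ofReal s ≤ dimH A := by
  rcases le_total s 0 with hs | hs
  · simp [ENNReal.ofReal_of_nonpos hs]
  have hμE : ∀ E : Set X, Metric.ediam E ≤ ENNReal.ofReal (r / 2) →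
      (C⁻¹ • μ) E ≤ Metric.ediam E ^ s := by
    intro E hE
    rcases E.eq_empty_or_nonempty with rfl | ⟨x, hx⟩
    · simp
    obtain ⟨D, hD, hDE⟩ : ∃ D : ℝ, 0 ≤ D ∧ Metric.ediam E = ENNReal.ofReal D :=
      ⟨_, ENNReal.toReal_nonneg,
        (ENNReal.ofReal_toReal (ne_top_of_le_ne_top ENNReal.ofReal_ne_top hE)).symm⟩
    rw [hDE, ENNReal.ofReal_le_ofReal_iff (half_pos hr).le] at hE
    have hDr : D < r := hE.trans_lt (half_lt_self hr)
    have hlim : Filter.Tendsto (fun d : ℝ => C * ENNReal.ofReal d ^ s) (nhdsWithin D (Set.Ioi D))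
        (nhds (C * ENNReal.ofReal D ^ s)) :=
      (((ENNReal.continuous_const_mul hC).comp (ENNReal.continuous_rpow_const.comp
        ENNReal.continuous_ofReal)).tendsto D).mono_left nhdsWithin_le_nhds
    rw [Measure.smul_apply, smul_eq_mul, mul_comm, ← div_eq_mul_inv, hDE]
    refine ENNReal.div_le_of_le_mul' (ge_of_tendsto hlim ?_)
    filter_upwards [Ioc_mem_nhdsGT hDr] with d hd
    refine (measure_mono fun z hz => ?_).trans (hμ x d ⟨hD.trans_lt hd.1, hd.2⟩)
    rw [Metric.mem_closedBall, ← ENNReal.ofReal_le_ofReal_iff (hD.trans hd.1.le), ← edist_dist]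
    exact (Metric.edist_le_ediam_of_mem hz hx).trans
      (hDE.le.trans (ENNReal.ofReal_le_ofReal hd.1.le))
  have hle : C⁻¹ • μ ≤ μH[s] :=
    Measure.le_hausdorffMeasure s _ _ (ENNReal.ofReal_pos.2 (half_pos hr)) hμE
  refine le_dimH_of_hausdorffMeasure_ne_zero (ne_of_gt ?_)
  rw [Real.coe_toNNReal s hs]
  exact (ENNReal.mul_pos (ENNReal.inv_ne_zero.2 hC) hA).trans_le (hle A)

/-- The law of a sequence of independent, uniformly distributed digits. -/
noncomputable def uniformDigits (ι : Type*) [Fintype ι] [Nonempty ι] [MeasurableSpace ι] :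
    Measure (ℕ → ι) :=
  Measure.infinitePi fun _ => (PMF.uniformOfFintype ι).toMeasure

lemma uniformDigits_cylinder {ι : Type*} [Fintype ι] [Nonempty ι] [MeasurableSpace ι]
    [MeasurableSingletonClass ι] (M : ℕ) (ω : ℕ → ι) :
    uniformDigits ι {ω' | ∀ i < M, ω' i = ω i} = (Fintype.card ι : ℝ≥0∞)⁻¹ ^ M := by
  have hpi : {ω' : ℕ → ι | ∀ i < M, ω' i = ω i} =
      (Finset.range M : Set ℕ).pi fun i => {ω i} := by
    ext
    simp [Set.mem_pi]
  rw [uniformDigits, hpi, Measure.infinitePi_pi _ fun i _ => measurableSet_singleton _]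
  simp_rw [PMF.toMeasure_apply_singleton _ _ (measurableSet_singleton _)]
  simp

lemma exists_separated_finset_uniformDigits_le {ι : Type*} [Fintype ι] [Nonempty ι]
    [MeasurableSpace ι] [MeasurableSingletonClass ι] (E : Set (ℕ → ι)) (M : ℕ) :
    ∃ T : Finset (ℕ → ι), (∀ ω ∈ T, ω ∈ E) ∧
      (T : Set (ℕ → ι)).Pairwise (fun ω ω' => ∃ i < M, ω i ≠ ω' i) ∧
      uniformDigits ι E ≤ T.card * (Fintype.card ι : ℝ≥0∞)⁻¹ ^ M := by
  let initial (ω : ℕ → ι) (i : Fin M) : ι := ω i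
  obtain ⟨T, hTE, hT⟩ := Set.exists_subset_bijOn E initial
  lift T to Finset (ℕ → ι) using hT.finite_iff_finite.2 (Set.toFinite _)
  refine ⟨T, fun ω hω => hTE hω, fun ω hω ω' hω' hne => ?_, ?_⟩
  · obtain ⟨i, hi⟩ := Function.ne_iff.1 (hT.injOn.ne hω hω' hne)
    exact ⟨i, i.2, hi⟩
  have hcover : E ⊆ ⋃ ω ∈ T, {ω' | ∀ i < M, ω' i = ω i} := fun ω' hω' => by
    obtain ⟨ω, hω, heq⟩ := hT.surjOn (Set.mem_image_of_mem initial hω')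
    exact Set.mem_iUnion₂.2 ⟨ω, hω, fun i hi => (congrFun heq ⟨i, hi⟩).symm⟩
  calc uniformDigits ι E ≤ ∑ ω ∈ T, uniformDigits ι {ω' | ∀ i < M, ω' i = ω i} :=
        (measure_mono hcover).trans (measure_biUnion_finset_le T _)
    _ = T.card * (Fintype.card ι : ℝ≥0∞)⁻¹ ^ M := by
        simp only [uniformDigits_cylinder, Finset.sum_const, nsmul_eq_mul]

lemma rpow_natCast_succ_le {a b : ℝ} (ha : a ∈ Set.Icc 0 b) (hb : b ≤ 1) (t : ℕ) :
    a ^ (t + 1 : ℝ) ≤ b ^ t := by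
  rw [← Nat.cast_succ, Real.rpow_natCast]
  exact (pow_le_pow_of_le_one ha.1 (ha.2.trans hb) t.le_succ).trans (pow_le_pow_left₀ ha.1 ha.2 t)

lemma turnBox_subset_closedBall {b : ℝ} (hβ : ∀ j, β j ∈ Set.Icc 0 b) (hb₀ : 0 ≤ b) (hb : b ≤ 1)
    {ρ : ℝ} (hρ : 0 ≤ ρ) (z : ℕ → Fin n → ℝ) (t : ℕ) :
    turnBox β ρ z t ⊆ Metric.closedBall (z t) (b ^ t * ρ) := fun x hx => by
  refine (dist_pi_le_iff (by positivity)).2 fun j => (hx j).trans ?_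
  gcongr
  exact rpow_natCast_succ_le (hβ j) hb t

section Dimension

variable {ι : Type*} {ρ b : ℝ} {N : ℕ} {play : (ℕ → ι) → ℕ → Fin n → ℝ}
  {code : (ℕ → ι) → Fin n → ℝ}

lemma IsBranching.continuous_code [TopologicalSpace ι] [DiscreteTopology ι]
    (h : IsBranching β ρ N play) (hcode : ∀ ω t, code ω ∈ turnBox β ρ (play ω) t) (hN : N ≠ 0)
    (hρ : 0 ≤ ρ) (hβ : ∀ j, β j ∈ Set.Icc 0 b) (hb₀ : 0 ≤ b) (hb : b < 1) : Continuous code := by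
  refine continuous_iff_continuousAt.2 fun ω => Metric.tendsto_nhds.2 fun ε hε => ?_
  have hlim : Filter.Tendsto (fun M : ℕ => (b ^ N) ^ M * ρ) Filter.atTop (nhds 0) := by
    simpa using (tendsto_pow_atTop_nhds_zero_of_lt_one (pow_nonneg hb₀ N)
      (pow_lt_one₀ hb₀ hb hN)).mul_const ρ
  obtain ⟨M, hM⟩ := (hlim.eventually (gt_mem_nhds (half_pos hε))).exists
  have hcyl : ∀ᶠ ω' in nhds ω, ∀ i ∈ Finset.range M, ω' i = ω i :=
    (Filter.eventually_all_finset _).2 fun i _ => (continuous_apply i).continuousAt.eventually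
      (show ∀ᶠ a in nhds (ω i), a = ω i by simp [nhds_discrete])
  filter_upwards [hcyl] with ω' hω'
  have hdist (ω : ℕ → ι) : dist (code ω) (play ω (M * N)) ≤ (b ^ N) ^ M * ρ := by
    rw [← pow_mul']
    exact turnBox_subset_closedBall hβ hb₀ hb.le hρ _ _ (hcode ω _)
  have hω := hdist ω
  rw [← h.eq_of_forall_lt fun i hi => hω' i (Finset.mem_range.2 hi)] at hω
  linarith [dist_triangle_right (code ω') (code ω) (play ω' (M * N)), hdist ω']

lemma IsBranching.card_mul_prod_le (h : IsBranching β ρ N play)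
    (hcode : ∀ ω t, code ω ∈ turnBox β ρ (play ω) t) (hρ : 0 < ρ) (hβ : ∀ j, β j ∈ Set.Icc 0 b)
    (hb : b ≤ 1) {M : ℕ} {d : ℝ} (hd : 0 ≤ d) (hMd : (b ^ N) ^ M * ρ ≤ d) {x : Fin n → ℝ}
    {T : Finset (ℕ → ι)}
    (hT : (T : Set (ℕ → ι)).Pairwise fun ω ω' => ∃ i < M, ω i ≠ ω' i)
    (hTx : ∀ ω ∈ T, code ω ∈ Metric.closedBall x d) :
    T.card * ((∏ j, β j) * ((∏ j, β j) ^ N) ^ M) ≤ (3 * d / ρ) ^ n := by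
  have hside (j : Fin n) : 0 ≤ β j ^ ((M * N : ℕ) + 1 : ℝ) * ρ :=
    mul_nonneg (Real.rpow_nonneg (hβ j).1 _) hρ.le
  have hside_le (j : Fin n) : β j ^ ((M * N : ℕ) + 1 : ℝ) * ρ ≤ d :=
    (mul_le_mul_of_nonneg_right (rpow_natCast_succ_le (hβ j) hb _) hρ.le).trans
      (by rwa [pow_mul'])
  have hpack := card_mul_prod_le_of_pairwiseDisjoint_Icc (m := fun _ => d) (y := x) hside
    (fun _ => hd)
    (fun ω hω ω' hω' hne => by
      simpa only [turnBox, gameBox_eq_Icc] using h.disjoint (hT hω hω' hne))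
    fun ω hω => ⟨code ω, by
      have hj (j : Fin n) := abs_le.1 ((dist_le_pi_dist (code ω) x j).trans (hTx ω hω))
      exact ⟨fun j => by simpa using by linarith [(hj j).1], fun j => by
        simpa using by linarith [(hj j).2]⟩, by
      simpa only [turnBox, gameBox_eq_Icc] using hcode ω (M * N)⟩
  have hvol : ∏ j, β j ^ ((M * N : ℕ) + 1 : ℝ) * ρ =
      (∏ j, β j) * ((∏ j, β j) ^ N) ^ M * ρ ^ n := by
    rw [prod_rpow_mul_const fun j => (hβ j).1, ← Nat.cast_succ, Real.rpow_natCast, pow_succ',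
      pow_mul']
  rw [hvol] at hpack
  rw [div_pow, le_div_iff₀ (by positivity), mul_assoc]
  calc _ ≤ ∏ j, (d + 2 * (β j ^ ((M * N : ℕ) + 1 : ℝ) * ρ)) := hpack
    _ ≤ ∏ _j : Fin n, 3 * d := Finset.prod_le_prod (fun j _ => by linarith [hside j])
        fun j _ => by linarith [hside_le j]
    _ = (3 * d) ^ n := by simp

lemma IsBranching.uniformDigits_preimage_closedBall_le [Fintype ι] [Nonempty ι]
    [MeasurableSpace ι] [MeasurableSingletonClass ι] (h : IsBranching β ρ N play)
    (hcode : ∀ ω t, code ω ∈ turnBox β ρ (play ω) t) (hρ : 0 < ρ) (hβ : ∀ j, β j ∈ Set.Ioc 0 b)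
    (hb₀ : 0 < b) (hb : b ≤ 1) {e : ℝ} (he : (b ^ N) ^ e ≤ Fintype.card ι * (∏ j, β j) ^ N)
    {M : ℕ} {d : ℝ} (hd : 0 ≤ d) (hMd : (b ^ N) ^ M * ρ ≤ d) (x : Fin n → ℝ) :
    uniformDigits ι (code ⁻¹' Metric.closedBall x d) ≤
      ENNReal.ofReal ((3 * d / ρ) ^ n / (∏ j, β j) * ((b ^ N) ^ M) ^ (-e)) := by
  have hP : 0 < ∏ j, β j := Finset.prod_pos fun j _ => (hβ j).1
  have hcard : 0 < (Fintype.card ι : ℝ) := Nat.cast_pos.2 Fintype.card_pos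
  obtain ⟨T, hTx, hT, hle⟩ :=
    exists_separated_finset_uniformDigits_le (code ⁻¹' Metric.closedBall x d) M
  have hTcard := h.card_mul_prod_le hcode hρ (fun j => Set.Ioc_subset_Icc_self (hβ j)) hb hd hMd
    hT hTx
  have hinv : (((Fintype.card ι : ℝ) * (∏ j, β j) ^ N)⁻¹) ^ M ≤ ((b ^ N) ^ M) ^ (-e) := by
    rw [Real.rpow_neg (by positivity), ← Real.rpow_pow_comm (by positivity), ← inv_pow]
    gcongr
  calc uniformDigits ι (code ⁻¹' Metric.closedBall x d)
      ≤ T.card * (Fintype.card ι : ℝ≥0∞)⁻¹ ^ M := hle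
    _ = ENNReal.ofReal (T.card * (Fintype.card ι : ℝ)⁻¹ ^ M) := by
        rw [ENNReal.ofReal_mul (Nat.cast_nonneg _), ENNReal.ofReal_pow (by positivity),
          ENNReal.ofReal_inv_of_pos hcard, ENNReal.ofReal_natCast, ENNReal.ofReal_natCast]
    _ ≤ _ := ENNReal.ofReal_le_ofReal ?_
  calc T.card * (Fintype.card ι : ℝ)⁻¹ ^ M
      = T.card * ((∏ j, β j) * ((∏ j, β j) ^ N) ^ M) / (∏ j, β j) *
          (((Fintype.card ι : ℝ) * (∏ j, β j) ^ N)⁻¹) ^ M := by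
        rw [mul_inv, mul_pow, inv_pow ((∏ j, β j) ^ N)]
        field_simp
    _ ≤ _ := by gcongr

lemma IsBranching.le_dimH_range [Fintype ι] [Nonempty ι] [TopologicalSpace ι] [DiscreteTopology ι]
    (h : IsBranching β ρ N play) (hcode : ∀ ω t, code ω ∈ turnBox β ρ (play ω) t) (hN : N ≠ 0)
    (hρ : 0 < ρ) (hβ : ∀ j, β j ∈ Set.Ioc 0 b) (hb : b ∈ Set.Ioo (0 : ℝ) 1) {e : ℝ} (he₀ : 0 ≤ e)
    (he : (b ^ N) ^ e ≤ Fintype.card ι * (∏ j, β j) ^ N) :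
    ENNReal.ofReal (n - e) ≤ dimH (Set.range code) := by
  borelize ι
  obtain ⟨hb₀, hb₁⟩ := hb
  have hP : 0 < ∏ j, β j := Finset.prod_pos fun j _ => (hβ j).1
  have hmeas : Measurable code := (h.continuous_code hcode hN hρ.le
    (fun j => Set.Ioc_subset_Icc_self (hβ j)) hb₀.le hb₁).measurable
  refine le_dimH_of_forall_measure_closedBall_le (μ := (uniformDigits ι).map code)
    (C := ENNReal.ofReal ((3 / ρ) ^ n / (∏ j, β j) * (b ^ N / ρ) ^ (-e))) ENNReal.ofReal_ne_top hρ
    (fun x d hd => ?_) ?_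
  · obtain ⟨hd₀, hdρ⟩ := hd
    obtain ⟨m, hm₁, hm₂⟩ := exists_nat_pow_near_of_lt_one (div_pos hd₀ hρ) ((div_le_one hρ).2 hdρ)
      (pow_pos hb₀ N) (pow_lt_one₀ hb₀.le hb₁ hN)
    have hscale : b ^ N / ρ * d ≤ (b ^ N) ^ (m + 1) := by
      rw [pow_succ', div_mul_eq_mul_div, mul_div_assoc]
      gcongr
    rw [Measure.map_apply hmeas Metric.isClosed_closedBall.measurableSet]
    calc _ ≤ ENNReal.ofReal ((3 * d / ρ) ^ n / (∏ j, β j) * ((b ^ N) ^ (m + 1)) ^ (-e)) :=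
          h.uniformDigits_preimage_closedBall_le hcode hρ hβ hb₀ hb₁.le he hd₀.le
            ((lt_div_iff₀ hρ).1 hm₁).le x
      _ ≤ ENNReal.ofReal ((3 * d / ρ) ^ n / (∏ j, β j) * (b ^ N / ρ * d) ^ (-e)) :=
          ENNReal.ofReal_le_ofReal <| mul_le_mul_of_nonneg_left
            (Real.rpow_le_rpow_of_nonpos (by positivity) hscale (neg_nonpos.2 he₀)) (by positivity)
      _ = _ := by
          rw [ENNReal.ofReal_rpow_of_pos hd₀, ← ENNReal.ofReal_mul (by positivity),
            Real.mul_rpow (by positivity) hd₀.le, sub_eq_add_neg, Real.rpow_add hd₀,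
            Real.rpow_natCast]
          ring_nf
  · have huniv : (uniformDigits ι) Set.univ = 1 := by
      simpa using uniformDigits_cylinder 0 (fun _ : ℕ => Classical.arbitrary ι)
    refine ne_of_gt ((zero_lt_one.trans_eq huniv.symm).trans_le ?_)
    calc uniformDigits ι Set.univ = uniformDigits ι (code ⁻¹' Set.range code) := by
          rw [Set.preimage_range]
      _ ≤ _ := Measure.le_map_apply hmeas.aemeasurable _

end Dimension

/-! ### Outcomes in winning sets -/

section Intersection

variable {c α δ ρ κ : ℝ} {S : Set (Fin n → ℝ)} {σ : Strategy n}

lemma antitone_turnBox_of_forall_isGood {b : ℕ → Fin n → ℝ} {N : ℕ} (hN : 0 < N)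
    (hb : ∀ M, IsGood β c δ ρ σ b (M * N)) : Antitone (turnBox β ρ b) := fun _ t hst =>
  have ht : t ≤ t * N := Nat.le_mul_of_pos_right t hN
  (hb t).antitoneOn (hst.trans ht) ht hst

lemma exists_isBranching (h : IsAdmissible β c α δ) (hρ : 0 < ρ)
    (hσ : IsWinningStrategy β α c ρ S σ) {R : ℕ}
    (hR : (R : ℝ) < ((3 : ℝ)⁻¹ ^ n - (3 ^ (n + 1) + 2 * 6 ^ n) * δ) /
      (∏ j, β j) ^ ⌊δ / α⌋₊ + 1) (y : Fin n → ℝ) :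
    ∃ play : (ℕ → Fin R) → ℕ → Fin n → ℝ, IsBranching β ρ ⌊δ / α⌋₊ play ∧
      (∀ ω, play ω 0 = y) ∧ ∀ ω M, IsGood β c δ ρ σ (play ω) (M * ⌊δ / α⌋₊) := by
  obtain ⟨play, hzero, hgood, heq, hdisj⟩ := exists_branching_sequences (ι := Fin R) h.floor_pos
    (D := fun t x x' => Disjoint (gameBox β (t + 1) ρ x) (gameBox β (t + 1) ρ x'))
    IsGood.congr (fun _ _ hb => exists_good_extensions h hρ hσ hb hR)
    (isGood_zero β c δ ρ σ fun _ => y)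
  exact ⟨play, ⟨fun ω => antitone_turnBox_of_forall_isGood h.floor_pos (hgood ω), heq, hdisj⟩,
    hzero, hgood⟩

lemma exists_isBranching_code_mem (h : IsAdmissible β c α δ) (hρ : 0 < ρ)
    (hσ : IsWinningStrategy β α c ρ S σ) {R : ℕ}
    (hR : (R : ℝ) < ((3 : ℝ)⁻¹ ^ n - (3 ^ (n + 1) + 2 * 6 ^ n) * δ) /
      (∏ j, β j) ^ ⌊δ / α⌋₊ + 1) (y : Fin n → ℝ) :
    ∃ (play : (ℕ → Fin R) → ℕ → Fin n → ℝ) (code : (ℕ → Fin R) → Fin n → ℝ),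
      IsBranching β ρ ⌊δ / α⌋₊ play ∧ (∀ ω t, code ω ∈ turnBox β ρ (play ω) t) ∧
        ∀ ω, code ω ∈ S ∩ gameBox β 1 ρ y := by
  have hβ₀ : ∀ j, 0 < β j := fun j => (h.entry_mem j).1
  obtain ⟨play, hplay, hzero, hgood⟩ := exists_isBranching h hρ hσ hR y
  choose code hcode using fun ω =>
    exists_forall_mem_turnBox (fun j => (hβ₀ j).le) hρ.le (hplay.antitone ω)
  refine ⟨play, code, hplay, hcode, fun ω => ⟨?_, ?_⟩⟩
  · exact hσ.mem_of_forall_notMem (hplay.antitone ω) (hcode ω) fun _ _ hp =>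
      notMem_gameBox_of_forall_isGood hβ₀ h.prod_lt_one h.exponent_mem.1 h.floor_pos (hgood ω)
        (hcode ω) hp
  · simpa [turnBox, hzero ω] using hcode ω 0

lemma rpow_div_abs_log_le {b : ℝ} (hb : b ∈ Set.Ioo (0 : ℝ) 1) (hκ : 0 < κ) {N : ℕ}
    (hδ : 0 < δ) (hN : δ / 2 ≤ N * α) :
    (b ^ N) ^ (2 * δ⁻¹ * |Real.log κ| * α / |Real.log b|) ≤ κ := by
  have hlog : Real.log b < 0 := Real.log_neg hb.1 hb.2
  have hscale : 1 ≤ 2 * δ⁻¹ * (N * α) := by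
    rw [← div_eq_mul_inv, div_mul_eq_mul_div, one_le_div hδ]
    linarith
  rw [← Real.log_le_log_iff (Real.rpow_pos_of_pos (pow_pos hb.1 N) _) hκ,
    Real.log_rpow (pow_pos hb.1 N), Real.log_pow, abs_of_neg hlog]
  calc 2 * δ⁻¹ * |Real.log κ| * α / -Real.log b * (N * Real.log b)
      = -(2 * δ⁻¹ * (N * α) * |Real.log κ|) := by
        field_simp [hlog.ne]
    _ ≤ -|Real.log κ| := neg_le_neg (le_mul_of_one_le_left (abs_nonneg _) hscale)
    _ ≤ Real.log κ := neg_abs_le _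

lemma nonempty_and_le_dimH_of_isWinning (h : IsAdmissible β c α δ) (hρ : 0 < ρ)
    (hS : IsWinning β α c ρ ρ S) (hκ₀ : 0 < κ)
    (hκ : κ ≤ (3 : ℝ)⁻¹ ^ n - (3 ^ (n + 1) + 2 * 6 ^ n) * δ) {b : ℝ}
    (hβ : ∀ j, β j ∈ Set.Ioc 0 b) (hb : b ∈ Set.Ioo (0 : ℝ) 1) (y : Fin n → ℝ) :
    (S ∩ gameBox β 1 ρ y).Nonempty ∧
      ENNReal.ofReal (n - 2 * δ⁻¹ * |Real.log κ| * α / |Real.log b|) ≤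
        dimH (S ∩ gameBox β 1 ρ y) := by
  obtain ⟨σ, hσ⟩ := exists_isWinningStrategy (fun j => (hβ j).1) h.alpha_pos.le h.exponent_mem.1 hS
  have hPN : 0 < (∏ j, β j) ^ ⌊δ / α⌋₊ := pow_pos h.prod_pos _
  set R := ⌈κ / (∏ j, β j) ^ ⌊δ / α⌋₊⌉₊
  have hR₀ : 0 < R := Nat.ceil_pos.2 (div_pos hκ₀ hPN)
  have hR : (R : ℝ) < ((3 : ℝ)⁻¹ ^ n - (3 ^ (n + 1) + 2 * 6 ^ n) * δ) /
      (∏ j, β j) ^ ⌊δ / α⌋₊ + 1 :=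
    (Nat.ceil_lt_add_one (div_pos hκ₀ hPN).le).trans_le (by gcongr)
  have hκR : κ ≤ Fintype.card (Fin R) * (∏ j, β j) ^ ⌊δ / α⌋₊ := by
    simpa only [Fintype.card_fin] using (div_le_iff₀ hPN).1 (Nat.le_ceil _)
  obtain ⟨play, code, hplay, hcode, hmem⟩ := exists_isBranching_code_mem h hρ hσ hR y
  have : Nonempty (Fin R) := ⟨⟨0, hR₀⟩⟩
  refine ⟨⟨_, hmem fun _ => Classical.arbitrary _⟩, ?_⟩
  have he₀ : 0 ≤ 2 * δ⁻¹ * |Real.log κ| * α / |Real.log b| := by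
    have := h.delta_mem.1
    have := h.alpha_pos
    positivity
  exact (hplay.le_dimH_range hcode h.floor_pos.ne' hρ hβ hb he₀ ((rpow_div_abs_log_le hb hκ₀
    h.delta_mem.1 (div_two_lt_floor_div_mul h.alpha_pos h.alpha_le_delta).le).trans hκR)).trans
    (dimH_mono (Set.range_subset_iff.2 hmem))

lemma inv_pow_mul_prod_sub_le (hn : n ≠ 0) (hβ : ∀ j, β j ∈ Set.Icc (0 : ℝ) (1 / 5)) {N : ℕ}
    (hN : N ≠ 0) (hδ : 0 ≤ δ) :
    (3 : ℝ)⁻¹ ^ n * ∏ j, (1 - 5 * β j ^ N) - 8 ^ n * (1 + 2 ^ (2 * n + 1)) * δ ≤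
      (3 : ℝ)⁻¹ ^ n - (3 ^ (n + 1) + 2 * 6 ^ n) * δ := by
  have hprod : ∏ j, (1 - 5 * β j ^ N) ≤ 1 := Finset.prod_le_one
    (fun j _ => by
      linarith [pow_le_of_le_one (hβ j).1 ((hβ j).2.trans (by norm_num)) hN, (hβ j).2])
    fun j _ => by linarith [pow_nonneg (hβ j).1 N]
  have hthree : (3 : ℝ) ^ n ≤ 8 ^ n := pow_le_pow_left₀ (by norm_num) (by norm_num) n
  have hsix : (6 : ℝ) ^ n ≤ 8 ^ n := pow_le_pow_left₀ (by norm_num) (by norm_num) n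
  have htwo : (2 : ℝ) ≤ 2 ^ (2 * n) := le_self_pow₀ (by norm_num) (by lia)
  have hconst : (3 : ℝ) ^ (n + 1) + 2 * 6 ^ n ≤ 8 ^ n * (1 + 2 ^ (2 * n + 1)) := by
    calc (3 : ℝ) ^ (n + 1) + 2 * 6 ^ n ≤ 8 ^ n * (1 + 2 * 2) := by
          rw [pow_succ]
          linarith
      _ ≤ _ := by
          rw [pow_succ' 2]
          gcongr
  gcongr
  exact mul_le_of_le_one_right (by positivity) hprod

end Intersection

end PotentialGame

theorem intersection_dimension_general {n : ℕ} (β : Fin n → ℝ)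
    (hβ : ∀ j, β j ∈ Set.Ioc (0 : ℝ) (1 / 2)) (c : ℝ) (hc : c ∈ Set.Ioo (0 : ℝ) 1)
    (ρ₂ : ℝ) (hρ₂ : 0 < ρ₂) (I : Type*) [Countable I] (αf : I → ℝ) (hαf : ∀ i, 0 ≤ αf i)
    (S : I → Set (Fin n → ℝ)) (hS : ∀ i, S i ∈ winFamily β (αf i) c ρ₂)
    (α : ℝ) (hα : 0 < α) (hαsum : α ^ c = ∑' i, αf i ^ c) (δ : ℝ) (hδ : 0 < δ)
    (hαδ : α ^ c ≤ δ ^ 2 * (1 - (∏ j, β j) ^ (1 - c)))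
    (κ : ℝ) (hκ₀ : 0 < κ) (hκ : κ ≤ (3 : ℝ)⁻¹ ^ n - (3 ^ (n + 1) + 2 * 6 ^ n) * δ)
    (βmax : ℝ) (hβmax : IsGreatest (Set.range β) βmax) (y : Fin n → ℝ) :
    ((⋂ i, S i) ∩ gameBox β 1 ρ₂ y).Nonempty ∧
      ENNReal.ofReal ((n : ℝ) - 2 * δ⁻¹ * |Real.log κ| * α / |Real.log βmax|) ≤
        dimH ((⋂ i, S i) ∩ gameBox β 1 ρ₂ y) := by
  have hδ₁ : δ ≤ 1 := by
    have hthree : (1 : ℝ) ≤ 3 ^ (n + 1) := one_le_pow₀ (by norm_num)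
    have hsix : (0 : ℝ) ≤ 6 ^ n := by positivity
    have hinv : (3 : ℝ)⁻¹ ^ n ≤ 1 := pow_le_one₀ (by norm_num) (by norm_num)
    nlinarith
  have hsum : HasSum (fun i => αf i ^ c) (α ^ c) := by
    refine hαsum ▸ Summable.hasSum (by_contra fun hnot => ?_)
    exact (Real.rpow_pos_of_pos hα c).ne' (hαsum.trans (tsum_eq_zero_of_not_summable hnot))
  have hwin : IsWinning β α c ρ₂ ρ₂ (⋂ i, S i) :=
    PotentialGame.isWinning_iInter (fun j => (hβ j).1.le) hc.1 hαf hα.le hsum hS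
  obtain ⟨⟨j, hj⟩, hmax⟩ := hβmax
  exact PotentialGame.nonempty_and_le_dimH_of_isWinning ⟨hβ, hc, hα, ⟨hδ, hδ₁⟩, hαδ⟩ hρ₂ hwin hκ₀
    hκ (fun j => ⟨(hβ j).1, hmax ⟨j, rfl⟩⟩) (hj ▸ ⟨(hβ j).1, (hβ j).2.trans_lt (by norm_num)⟩) y

/-- **Dimension of intersections of winning sets.**  Let `A` be the diagonal `(n × n)`-matrix
with diagonal entries `β j ∈ (0, 1/5)`, `c ∈ (0,1)` and `ρ₂ > 0`.  Let `I` be at most countable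
and, for `i ∈ I`, let `αf i ∈ (0,1)` and `S i ∈ 𝒮(αf i, A, c, ρ₂)`; set `S = ⋂ i, S i`.
Suppose there are `α ∈ (0,1)` with `α^c = Σ_i (αf i)^c` and `δ ∈ (0,1)` with
`α^c ≤ δ²(1 − (∏_j β_j)^{1−c}) < 1` and
`3^{−n} ∏_j (1 − 5 β_j^{⌊δ/α⌋}) > 8^n (1 + 2^{2n+1}) δ`.  Then for every `y ∈ ℝⁿ`,
`S ∩ (A(B[0,ρ₂]) + y)` is non-empty and has Hausdorff dimension at least
`max{n − K₁ α / |log β_max|, 0}`. -/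
theorem intersection_dimension {n : ℕ} (hn : 0 < n)
    (β : Fin n → ℝ) (hβ : ∀ j, β j ∈ Set.Ioo (0 : ℝ) (1 / 5))
    (c : ℝ) (hc : c ∈ Set.Ioo (0 : ℝ) 1) (ρ₂ : ℝ) (hρ₂ : 0 < ρ₂)
    (I : Type) [Countable I] (αf : I → ℝ) (hαf : ∀ i, αf i ∈ Set.Ioo (0 : ℝ) 1)
    (S : I → Set (Fin n → ℝ)) (hS : ∀ i, S i ∈ winFamily β (αf i) c ρ₂)
    (α : ℝ) (hα : α ∈ Set.Ioo (0 : ℝ) 1) (hαsum : α ^ c = ∑' i, αf i ^ c)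
    (δ : ℝ) (hδ : δ ∈ Set.Ioo (0 : ℝ) 1)
    (h1 : α ^ c ≤ δ ^ 2 * (1 - (∏ j, β j) ^ (1 - c)))
    (h1' : δ ^ 2 * (1 - (∏ j, β j) ^ (1 - c)) < 1)
    (h2 : (3 : ℝ)⁻¹ ^ n * ∏ j, (1 - 5 * β j ^ ⌊δ / α⌋₊)
            > 8 ^ n * (1 + 2 ^ (2 * n + 1)) * δ)
    (βmax : ℝ) (hβmax : IsGreatest (Set.range β) βmax)
    (K₁ : ℝ)
    (hK₁ : K₁ = 2 * δ⁻¹ *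
      |Real.log ((3 : ℝ)⁻¹ ^ n * ∏ j, (1 - 5 * β j ^ ⌊δ / α⌋₊)
          - 8 ^ n * (1 + 2 ^ (2 * n + 1)) * δ)|)
    (y : Fin n → ℝ) :
    ((⋂ i, S i) ∩ gameBox β 1 ρ₂ y).Nonempty ∧
      ENNReal.ofReal ((n : ℝ) - K₁ * α / |Real.log βmax|) ≤
        dimH ((⋂ i, S i) ∩ gameBox β 1 ρ₂ y) := by
  have hβ' : ∀ j, β j ∈ Set.Ioc (0 : ℝ) (1 / 2) :=
    fun j => ⟨(hβ j).1, (hβ j).2.le.trans (by norm_num)⟩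
  have hadm : PotentialGame.IsAdmissible β c α δ := ⟨hβ', hc, hα.1, ⟨hδ.1, hδ.2.le⟩, h1⟩
  subst hK₁
  exact intersection_dimension_general β hβ' c hc ρ₂ hρ₂ I αf (fun i => (hαf i).1.le) S hS α hα.1
    hαsum δ hδ.1 h1 _ (sub_pos.2 h2) (PotentialGame.inv_pow_mul_prod_sub_le hn.ne'
      (fun j => Set.Ioo_subset_Icc_self (hβ j)) hadm.floor_pos.ne' hδ.1.le) βmax hβmax y
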